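/- arXiv:2504.10687 — 5 statements merged into one kernel-verified Lean document; each statement's English description precedes it below -/
import Mathlib

section
/- Let k ≥ 3 and let S be an eventually periodic balanced sequence over a k-element alphabet {a_1,…,a_k} with densities r_1 > r_2 > … > r_k > 0. Suppose for every 1 ≤ i ≤ k there exist two consecutive occurrences of a_i in S with no a_j (for any j > i) between them. Then r_i = 2^{k−i}/(2^k − 1) for all i. -/
/-!
Since `0` is nested, `00` occurs, so balance forbids two adjacent nonzero letters. Let `1 0^d 1`
witness that `1` is nested. Balance then puts a `1` in every window of length `d + 2`, and puts any
two nonzero letters at distance at least `d`. A letter `x ≥ 2` is thus surrounded by a long window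
free of `1`, which forces `d = 2`. Hence consecutive `1`s are separated by `00` or by `0x0` with
`x ≥ 2`, so that `0` is exactly twice as frequent as `1`.

Deleting all `0`s from the sequence leaves a balanced nested sequence over one letter fewer, so by
induction every letter is twice as frequent as the next one as long as three letters are left. Over
three letters balance makes the blocks `100` and `1020` alternate, so that `1` is twice as frequent
as `2`.
-/

open Filter Topology

/-- A set of positions, given as a predicate, is balanced if the numbers of its elements in two
windows of equal length differ by at most one. A sequence is balanced when the set of occurrences
of each letter is. -/
def IsBalanced (p : ℕ → Prop) [DecidablePred p] : Prop :=
  ∀ m n l, Nat.count (fun t => p (m + t)) l ≤ Nat.count (fun t => p (n + t)) l + 1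

theorem isBalanced_iff_abs_card_sub_card_le_one {p : ℕ → Prop} [DecidablePred p] :
    IsBalanced p ↔ ∀ m n l, |(((Finset.range l).filter fun t => p (m + t)).card : ℤ) -
      ((Finset.range l).filter fun t => p (n + t)).card| ≤ 1 := by
  simp only [IsBalanced, Nat.count_eq_card_filter_range, abs_le]
  refine ⟨fun h m n l => ?_, fun h m n l => ?_⟩
  · have := h m n l
    have := h n m l
    omega
  · have := (h m n l).2
    omega

theorem count_not_add_count (p : ℕ → Prop) [DecidablePred p] (n : ℕ) :
    Nat.count (fun t => ¬ p t) n + Nat.count p n = n := by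
  rw [Nat.count_eq_card_filter_range, Nat.count_eq_card_filter_range, add_comm,
    Finset.card_filter_add_card_filter_not, Finset.card_range]

theorem count_comp_nth {p q : ℕ → Prop} [DecidablePred q] (hp : (Set.ofPred p).Infinite)
    (hqp : ∀ n, q n → p n) (n : ℕ) :
    Nat.count (fun i => q (Nat.nth p i)) n = Nat.count q (Nat.nth p n) := by
  classical
  have count_eq (m : ℕ) : Nat.count q m = (((Finset.range m).filter p).filter q).card := by
    rw [Nat.count_eq_card_filter_range, Finset.filter_filter]
    congr! 3 with t
    exact (and_iff_right_of_imp (hqp t)).symm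
  induction n with
  | zero =>
    have before_first : (Finset.range (Nat.nth p 0)).filter p = ∅ := by
      rw [← Finset.card_eq_zero, ← Nat.count_eq_card_filter_range, Nat.count_nth_zero]
    rw [Nat.count_zero, count_eq, before_first, Finset.filter_empty, Finset.card_empty]
  | succ n ih =>
    rw [Nat.count_succ, ih, count_eq, count_eq, Nat.filter_range_nth_eq_insert_of_infinite hp,
      Finset.filter_insert]
    split_ifs <;> simp

namespace IsBalanced

variable {p q : ℕ → Prop} [DecidablePred p] [DecidablePred q]

theorem count_add_add_count_le (hp : IsBalanced p) (m n l : ℕ) :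
    Nat.count p (m + l) + Nat.count p n ≤ Nat.count p (n + l) + Nat.count p m + 1 := by
  have := hp m n l
  rw [Nat.count_add, Nat.count_add]
  omega

theorem not (hp : IsBalanced p) : IsBalanced fun n => ¬ p n := by
  intro m n l
  have := hp n m l
  have := count_not_add_count (fun t => p (m + t)) l
  have := count_not_add_count (fun t => p (n + t)) l
  lia

theorem exists_mem_window (hp : IsBalanced p) {a d : ℕ} (hd : 0 < d) (ha : p a)
    (hb : p (a + d)) (n : ℕ) : ∃ t ≤ d, p (n + t) := by
  by_contra! hn
  have window_empty : Nat.count (fun t => p (n + t)) (d + 1) = 0 :=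
    Nat.count_iff_forall_not.2 fun t ht => hn t (Nat.le_of_lt_succ ht)
  have two_le : 2 ≤ Nat.count (fun t => p (a + t)) (d + 1) := by
    have := Nat.count_strict_mono (p := fun t => p (a + t)) (m := 0) ha hd
    rw [Nat.count_succ, if_pos hb]
    omega
  have := hp a n (d + 1)
  omega

theorem le_of_forall_mem_of_not_mem (hp : IsBalanced p) {a d e x : ℕ} (hall : ∀ t < d, p (a + t))
    (he : 0 < e) (hx : ¬ p x) (hxe : ¬ p (x + e)) : d ≤ e := by
  obtain ⟨t, hte, ht⟩ := hp.not.exists_mem_window he hx hxe a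
  by_contra! hed
  exact ht (hall t (by omega))

theorem nth_add_add_nth_le (hp : IsBalanced p) (hinf : (Set.ofPred p).Infinite) (m n l : ℕ) :
    Nat.nth p (m + l) + Nat.nth p n ≤ Nat.nth p (n + l) + Nat.nth p m + 1 := by
  by_contra! hlt
  have hn : Nat.nth p n ≤ Nat.nth p (n + l) := Nat.nth_monotone hinf (Nat.le_add_right n l)
  obtain ⟨L, hL⟩ := Nat.exists_eq_add_of_le hn
  have window_le : Nat.count p (Nat.nth p m + 1 + (L + 1)) ≤ m + l :=
    (Nat.count_monotone p (by omega)).trans (Nat.count_nth_of_infinite hinf (m + l)).le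
  have hbal := hp.count_add_add_count_le (Nat.nth p n) (Nat.nth p m + 1) (L + 1)
  rw [← add_assoc (Nat.nth p n), ← hL] at hbal
  simp only [Nat.count_nth_of_infinite hinf, Nat.count_nth_succ_of_infinite hinf] at hbal
  omega

-- A run of `l + 1` consecutive elements of `p` spans at most one position more than any other such
-- run, and that position is free because the next element of `p` is not adjacent.
theorem comp_nth (hp : IsBalanced p) (hinf : (Set.ofPred p).Infinite)
    (hgap : ∀ n, p n → ¬ p (n + 1)) (hq : IsBalanced q) (hqp : ∀ n, q n → p n) :
    IsBalanced fun i => q (Nat.nth p i) := by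
  intro m n l
  obtain _ | l := l
  · simp
  have hm : Nat.nth p m ≤ Nat.nth p (m + l) := Nat.nth_monotone hinf (Nat.le_add_right m l)
  obtain ⟨L, hL⟩ := Nat.exists_eq_add_of_le hm
  have next_not_adjacent : Nat.nth p (n + l) + 2 ≤ Nat.nth p (n + l + 1) := by
    have hlt : Nat.nth p (n + l) < Nat.nth p (n + l + 1) := Nat.nth_strictMono hinf (by omega)
    have hne : Nat.nth p (n + l + 1) ≠ Nat.nth p (n + l) + 1 := fun h =>
      hgap _ (Nat.nth_mem_of_infinite hinf (n + l)) (h ▸ Nat.nth_mem_of_infinite hinf (n + l + 1))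
    omega
  have span_le := hp.nth_add_add_nth_le hinf m n l
  have hbal := hq.count_add_add_count_le (Nat.nth p m) (Nat.nth p n) (L + 1)
  have window_le : Nat.count q (Nat.nth p n + (L + 1)) ≤ Nat.count q (Nat.nth p (n + l + 1)) :=
    Nat.count_monotone q (by omega)
  have hcount := count_comp_nth hinf hqp
  have count_m := Nat.count_add (fun i => q (Nat.nth p i)) m (l + 1)
  have count_n := Nat.count_add (fun i => q (Nat.nth p i)) n (l + 1)
  rw [hcount, hcount, ← add_assoc] at count_n
  rw [← add_assoc, Nat.count_succ, hcount, hcount, hL, ← Nat.count_succ] at count_m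
  rw [← add_assoc] at hbal
  lia

end IsBalanced

/-- A balanced sequence over the letters `0, …, k - 1` in which each letter has two consecutive
occurrences separated only by smaller letters. Letters are natural numbers, so that deleting `0`
and shifting the remaining letters down stays within the same type. -/
structure NestedBalanced (k : ℕ) (s : ℕ → ℕ) : Prop where
  lt : ∀ n, s n < k
  balanced : ∀ a < k, IsBalanced (s · = a)
  nested : ∀ a < k, ∃ m n, m < n ∧ s m = a ∧ s n = a ∧ ∀ t, m < t → t < n → s t < a

/-- The factor of `s` at position `n` is `1 0 0 1`. -/
structure ShortReturn (s : ℕ → ℕ) (n : ℕ) : Prop where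
  one : s n = 1
  zero : s (n + 1) = 0
  zero' : s (n + 2) = 0
  one' : s (n + 3) = 1

/-- The factor of `s` at position `n` is `1 0 x 0 1` for some letter `x ≥ 2`. -/
structure LongReturn (s : ℕ → ℕ) (n : ℕ) : Prop where
  one : s n = 1
  zero : s (n + 1) = 0
  two_le : 2 ≤ s (n + 2)
  zero' : s (n + 3) = 0
  one' : s (n + 4) = 1

theorem ShortReturn.count_zero {s : ℕ → ℕ} {n : ℕ} (h : ShortReturn s n) :
    Nat.count (s · = 0) (n + 3) = Nat.count (s · = 0) n + 2 := by
  simp [Nat.count_succ, h.one, h.zero, h.zero']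

theorem ShortReturn.count_one {s : ℕ → ℕ} {n : ℕ} (h : ShortReturn s n) :
    Nat.count (s · = 1) (n + 3) = Nat.count (s · = 1) n + 1 := by
  simp [Nat.count_succ, h.one, h.zero, h.zero']

theorem ShortReturn.count_two {s : ℕ → ℕ} {n : ℕ} (h : ShortReturn s n) :
    Nat.count (s · = 2) (n + 3) = Nat.count (s · = 2) n := by
  simp [Nat.count_succ, h.one, h.zero, h.zero']

theorem LongReturn.count_zero {s : ℕ → ℕ} {n : ℕ} (h : LongReturn s n) :
    Nat.count (s · = 0) (n + 4) = Nat.count (s · = 0) n + 2 := by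
  have : s (n + 2) ≠ 0 := by have := h.two_le; omega
  simp [Nat.count_succ, h.one, h.zero, h.zero', this]

theorem LongReturn.count_one {s : ℕ → ℕ} {n : ℕ} (h : LongReturn s n) :
    Nat.count (s · = 1) (n + 4) = Nat.count (s · = 1) n + 1 := by
  have : s (n + 2) ≠ 1 := by have := h.two_le; omega
  simp [Nat.count_succ, h.one, h.zero, h.zero', this]

theorem LongReturn.count_two {s : ℕ → ℕ} {n : ℕ} (h : LongReturn s n) (h2 : s (n + 2) = 2) :
    Nat.count (s · = 2) (n + 4) = Nat.count (s · = 2) n + 1 := by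
  simp [Nat.count_succ, h.one, h.zero, h.zero', h2]

theorem frequently_atTop_eq_of_step {α : Type*} {f : ℕ → α} {P : ℕ → Prop} {n₀ : ℕ} (h₀ : P n₀)
    (step : ∀ n, P n → ∃ m > n, P m ∧ f m = f n) : ∃ᶠ n in atTop, f n = f n₀ := by
  have exists_ge (x : ℕ) : ∃ n ≥ x, P n ∧ f n = f n₀ := by
    induction x with
    | zero => exact ⟨n₀, n₀.zero_le, h₀, rfl⟩
    | succ x ih =>
      obtain ⟨n, hxn, hn, hfn⟩ := ih
      obtain ⟨m, hnm, hm, hfm⟩ := step n hn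
      exact ⟨m, by omega, hm, hfm.trans hfn⟩
  refine frequently_atTop.2 fun x => ?_
  obtain ⟨n, hxn, -, hn⟩ := exists_ge x
  exact ⟨n, hxn, hn⟩

namespace NestedBalanced

variable {k : ℕ} {s : ℕ → ℕ}

theorem exists_ge_eq (h : NestedBalanced k s) {a : ℕ} (ha : a < k) (x : ℕ) :
    ∃ n ≥ x, s n = a := by
  obtain ⟨m, n, hmn, hm, hn, -⟩ := h.nested a ha
  obtain ⟨d, rfl⟩ := Nat.exists_eq_add_of_lt hmn
  obtain ⟨t, -, ht⟩ := (h.balanced a ha).exists_mem_window d.succ_pos hm hn x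
  exact ⟨x + t, Nat.le_add_right x t, ht⟩

theorem infinite_ne_zero (h : NestedBalanced k s) (hk : 1 < k) : {n | s n ≠ 0}.Infinite := by
  refine Set.infinite_of_forall_exists_gt fun x => ?_
  obtain ⟨n, hxn, hn⟩ := h.exists_ge_eq hk (x + 1)
  exact ⟨n, by simp [hn], hxn⟩

theorem apply_succ_eq_zero (h : NestedBalanced k s) (hk : 0 < k) {n : ℕ} (hn : s n ≠ 0) :
    s (n + 1) = 0 := by
  by_contra hn'
  obtain ⟨a, b, hab, ha, hb, hlt⟩ := h.nested 0 hk
  obtain rfl : b = a + 1 := by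
    by_contra hne
    exact Nat.not_lt_zero _ (hlt (a + 1) a.lt_succ_self (by omega))
  have factor_zero_zero (t : ℕ) (ht : t < 2) : s (a + t) = 0 := by interval_cases t <;> assumption
  have := (h.balanced 0 hk).le_of_forall_mem_of_not_mem factor_zero_zero one_pos hn hn'
  omega

theorem apply_eq_zero_of_apply_succ_ne_zero (h : NestedBalanced k s) (hk : 0 < k) {n : ℕ}
    (hn : s (n + 1) ≠ 0) : s n = 0 :=
  not_not.1 fun hn' => hn (h.apply_succ_eq_zero hk hn')

theorem exists_shortReturn (h : NestedBalanced k s) (hk : 3 ≤ k) : ∃ n, ShortReturn s n := by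
  obtain ⟨a, b, hab, ha, hb, hlt⟩ := h.nested 1 (by omega)
  obtain ⟨d, rfl⟩ := Nat.exists_eq_add_of_lt hab
  have zero_between (t : ℕ) (ht : t < d) : s (a + 1 + t) = 0 :=
    Nat.lt_one_iff.1 (hlt _ (by omega) (by omega))
  have separated {y z : ℕ} (hyz : y < z) (hy : s y ≠ 0) (hz : s z ≠ 0) : y + max d 2 ≤ z := by
    obtain ⟨e, rfl⟩ := Nat.exists_eq_add_of_lt hyz
    have d_le : d ≤ e + 1 := (h.balanced 0 (by omega)).le_of_forall_mem_of_not_mem zero_between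
      e.succ_pos hy hz
    have e_ne_zero : e ≠ 0 := by
      rintro rfl
      exact hz (h.apply_succ_eq_zero (by omega) hy)
    omega
  obtain rfl : d = 2 := by
    obtain ⟨x, hdx, hx⟩ := h.exists_ge_eq (a := 2) (by omega) (max d 2)
    have one_far_from_x {y : ℕ} (hy : s y = 1) : y + max d 2 ≤ x ∨ x + max d 2 ≤ y := by
      rcases lt_trichotomy y x with hyx | rfl | hxy
      · exact Or.inl (separated hyx (by omega) (by omega))
      · omega
      · exact Or.inr (separated hxy (by omega) (by omega))
    obtain ⟨t, htd, ht⟩ := (h.balanced 1 (by omega)).exists_mem_window d.succ_pos ha hb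
      (x + 1 - max d 2)
    have := one_far_from_x ht
    omega
  exact ⟨a, ha, zero_between 0 two_pos, zero_between 1 one_lt_two, hb⟩

theorem exists_one_of_window_four (h : NestedBalanced k s) (hk : 3 ≤ k) (n : ℕ) :
    s n = 1 ∨ s (n + 1) = 1 ∨ s (n + 2) = 1 ∨ s (n + 3) = 1 := by
  obtain ⟨a, ha⟩ := h.exists_shortReturn hk
  obtain ⟨t, ht, hnt⟩ :=
    (h.balanced 1 (by omega)).exists_mem_window three_pos ha.one ha.one' n
  interval_cases t <;> simp_all

theorem longReturn_of_two_le (h : NestedBalanced k s) (hk : 3 ≤ k) {n : ℕ}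
    (hn : 2 ≤ s (n + 2)) : LongReturn s n := by
  have zero : s (n + 1) = 0 := h.apply_eq_zero_of_apply_succ_ne_zero (by omega) (by lia)
  have zero' : s (n + 3) = 0 := h.apply_succ_eq_zero (n := n + 2) (by omega) (by omega)
  have one_before := h.exists_one_of_window_four hk n
  have one_after : s (n + 1) = 1 ∨ s (n + 2) = 1 ∨ s (n + 3) = 1 ∨ s (n + 4) = 1 :=
    h.exists_one_of_window_four hk (n + 1)
  exact ⟨by omega, zero, hn, zero', by omega⟩

theorem exists_longReturn (h : NestedBalanced k s) (hk : 3 ≤ k) : ∃ n, LongReturn s n := by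
  obtain ⟨x, hx, hsx⟩ := h.exists_ge_eq (a := 2) (by omega) 2
  obtain ⟨n, rfl⟩ := Nat.exists_eq_add_of_le' hx
  exact ⟨n, h.longReturn_of_two_le hk hsx.ge⟩

theorem apply_add_two_ne_one (h : NestedBalanced k s) (hk : 3 ≤ k) {n : ℕ} (hn : s n = 1) :
    s (n + 2) ≠ 1 := fun hn' => by
  obtain ⟨m, hm⟩ := h.exists_longReturn hk
  have factor_zero_large_zero (t : ℕ) (ht : t < 3) : s (m + 1 + t) ≠ 1 := by
    have hm2 : s (m + 2) ≠ 1 := by have := hm.two_le; omega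
    interval_cases t <;> simp [add_assoc, hm.zero, hm2, hm.zero']
  have := (h.balanced 1 (by omega)).not.le_of_forall_mem_of_not_mem factor_zero_large_zero two_pos
    (not_not.2 hn) (not_not.2 hn')
  omega

theorem apply_add_two_ne_zero (h : NestedBalanced k s) (hk : 3 ≤ k) {n : ℕ}
    (hn : s n = 0) (hn' : s (n + 1) = 0) : s (n + 2) ≠ 0 := fun hn'' => by
  obtain ⟨m, hm⟩ := h.exists_longReturn hk
  have factor_zero_zero_zero (t : ℕ) (ht : t < 3) : s (n + t) = 0 := by
    interval_cases t <;> assumption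
  have := (h.balanced 0 (by omega)).le_of_forall_mem_of_not_mem factor_zero_zero_zero two_pos
    (by simp [hm.one]) (ne_of_gt (two_pos.trans_le hm.two_le))
  omega

theorem shortReturn_or_longReturn (h : NestedBalanced k s) (hk : 3 ≤ k) {n : ℕ}
    (hn : s n = 1) : ShortReturn s n ∨ LongReturn s n := by
  have zero : s (n + 1) = 0 := h.apply_succ_eq_zero (by omega) (by omega)
  have ne_one : s (n + 2) ≠ 1 := h.apply_add_two_ne_one hk hn
  rcases Nat.eq_zero_or_pos (s (n + 2)) with zero' | hpos
  · have ne_zero : s (n + 3) ≠ 0 := h.apply_add_two_ne_zero hk zero zero'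
    have n4 : s (n + 4) = 0 := h.apply_succ_eq_zero (n := n + 3) (by omega) ne_zero
    have one_after : s (n + 1) = 1 ∨ s (n + 2) = 1 ∨ s (n + 3) = 1 ∨ s (n + 4) = 1 :=
      h.exists_one_of_window_four hk (n + 1)
    exact Or.inl ⟨hn, zero, zero', by omega⟩
  · exact Or.inr (h.longReturn_of_two_le hk (by omega))

theorem frequently_count_zero_sub_two_mul_count_one (h : NestedBalanced k s) (hk : 3 ≤ k) :
    ∃ c : ℝ, ∃ᶠ n in atTop, (Nat.count (s · = 0) n : ℝ) - 2 * Nat.count (s · = 1) n = c := by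
  obtain ⟨n₀, hn₀⟩ := h.exists_shortReturn hk
  refine ⟨_, frequently_atTop_eq_of_step (P := (s · = 1)) hn₀.one fun n hn => ?_⟩
  rcases h.shortReturn_or_longReturn hk hn with hn | hn
  · refine ⟨n + 3, by omega, hn.one', ?_⟩
    rw [hn.count_zero, hn.count_one]
    push_cast
    ring
  · refine ⟨n + 4, by omega, hn.one', ?_⟩
    rw [hn.count_zero, hn.count_one]
    push_cast
    ring

-- Two short returns in a row contain `0 0 1 0 0`, whereas a long return is `1 0 x 0 1`.
theorem longReturn_of_shortReturn (h : NestedBalanced k s) (hk : 3 ≤ k) {n : ℕ}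
    (hn : ShortReturn s n) : LongReturn s (n + 3) := by
  refine (h.shortReturn_or_longReturn hk hn.one').resolve_left fun hn' => ?_
  obtain ⟨m, hm⟩ := h.exists_longReturn hk
  have hm2 : s (m + 2) ≠ 0 := by have := hm.two_le; omega
  have hbal : Nat.count (fun t => s (n + 1 + t) = 0) 5 ≤
      Nat.count (fun t => s (m + t) = 0) 5 + 1 := h.balanced 0 (by omega) (n + 1) m 5
  have n4 : s (n + 4) = 0 := hn'.zero
  have n5 : s (n + 5) = 0 := hn'.zero'
  have count_short : Nat.count (fun t => s (n + 1 + t) = 0) 5 = 4 := by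
    simp [Nat.count_succ, add_assoc, hn.zero, hn.zero', hn.one', n4, n5]
  have count_long : Nat.count (fun t => s (m + t) = 0) 5 = 2 := by
    simp [Nat.count_succ, hm.one, hm.zero, hm2, hm.zero', hm.one']
  omega

-- Two long returns in a row contain `2 0 1 0 2`, whereas `1 0 0 1 0` is free of the letter `2`.
theorem shortReturn_of_longReturn (h : NestedBalanced 3 s) {n : ℕ} (hn : LongReturn s n) :
    ShortReturn s (n + 4) := by
  refine (h.shortReturn_or_longReturn le_rfl hn.one').resolve_right fun hn' => ?_
  have eq_two {x : ℕ} (hx : 2 ≤ s x) : s x = 2 := by have := h.lt x; omega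
  obtain ⟨m, hm⟩ := h.exists_shortReturn le_rfl
  have m4 : s (m + 4) = 0 := h.apply_succ_eq_zero three_pos (n := m + 3) (by simp [hm.one'])
  obtain ⟨t, ht, hmt⟩ := (h.balanced 2 (by omega)).exists_mem_window four_pos
    (eq_two hn.two_le) (eq_two hn'.two_le) m
  interval_cases t <;>
    simp [hm.one, hm.zero, hm.zero', hm.one', m4] at hmt

theorem frequently_count_one_sub_two_mul_count_two (h : NestedBalanced 3 s) :
    ∃ c : ℝ, ∃ᶠ n in atTop, (Nat.count (s · = 1) n : ℝ) - 2 * Nat.count (s · = 2) n = c := by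
  obtain ⟨n₀, hn₀⟩ := h.exists_longReturn le_rfl
  refine ⟨_, frequently_atTop_eq_of_step (P := LongReturn s) hn₀ fun n hn => ?_⟩
  have hshort := h.shortReturn_of_longReturn hn
  have n2 : s (n + 2) = 2 := by have := h.lt (n + 2); have := hn.two_le; omega
  refine ⟨n + 4 + 3, by omega, h.longReturn_of_shortReturn le_rfl hshort, ?_⟩
  rw [hshort.count_one, hshort.count_two, hn.count_one, hn.count_two n2]
  push_cast
  ring

end NestedBalanced

/-- The sequence obtained from `s` by deleting the letter `0` and decreasing the other letters by
one. It is meaningful when `s` has infinitely many nonzero letters, since `Nat.nth` returns junk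
past the end of a finite set. -/
noncomputable def deleteZero (s : ℕ → ℕ) (n : ℕ) : ℕ := s (Nat.nth (s · ≠ 0) n) - 1

section deleteZero

variable {k : ℕ} {s : ℕ → ℕ}

theorem deleteZero_eq_iff (hs : {n | s n ≠ 0}.Infinite) {a n : ℕ} :
    deleteZero s n = a ↔ s (Nat.nth (s · ≠ 0) n) = a + 1 := by
  have : s (Nat.nth (s · ≠ 0) n) ≠ 0 := Nat.nth_mem_of_infinite hs n
  unfold deleteZero
  omega

theorem deleteZero_apply_count {n : ℕ} (hn : s n ≠ 0) :
    deleteZero s (Nat.count (s · ≠ 0) n) = s n - 1 := by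
  rw [deleteZero, Nat.nth_count (p := (s · ≠ 0)) hn]

theorem count_deleteZero (hs : {n | s n ≠ 0}.Infinite) (a n : ℕ) :
    Nat.count (deleteZero s · = a) n = Nat.count (s · = a + 1) (Nat.nth (s · ≠ 0) n) := by
  simp only [deleteZero_eq_iff hs]
  exact count_comp_nth (q := (s · = a + 1)) hs (fun m hm => by omega) n

theorem NestedBalanced.nestedBalanced_deleteZero (h : NestedBalanced (k + 1) s) (hk : 0 < k) :
    NestedBalanced k (deleteZero s) := by
  have hs := h.infinite_ne_zero (by omega)
  refine ⟨fun n => ?_, fun a ha => ?_, fun a ha => ?_⟩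
  · have := h.lt (Nat.nth (s · ≠ 0) n)
    unfold deleteZero
    omega
  · simp only [deleteZero_eq_iff hs]
    exact (h.balanced 0 k.succ_pos).not.comp_nth hs
      (fun n hn hn' => hn' (h.apply_succ_eq_zero k.succ_pos hn)) (h.balanced (a + 1) (by omega))
      fun n hn => by omega
  · obtain ⟨m, n, hmn, hm, hn, hlt⟩ := h.nested (a + 1) (by omega)
    have hm0 : s m ≠ 0 := by omega
    have hn0 : s n ≠ 0 := by omega
    refine ⟨Nat.count (s · ≠ 0) m, Nat.count (s · ≠ 0) n, Nat.count_strict_mono hm0 hmn,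
      by rw [deleteZero_apply_count hm0, hm]; rfl, by rw [deleteZero_apply_count hn0, hn]; rfl,
      fun t hmt htn => ?_⟩
    rw [← Nat.nth_lt_nth hs, Nat.nth_count (p := (s · ≠ 0)) hm0] at hmt
    rw [← Nat.nth_lt_nth hs, Nat.nth_count (p := (s · ≠ 0)) hn0] at htn
    have := hlt _ hmt htn
    have : s (Nat.nth (s · ≠ 0) t) ≠ 0 := Nat.nth_mem_of_infinite hs t
    unfold deleteZero
    omega

theorem NestedBalanced.frequently_count_sub_two_mul_count_succ (hk : 3 ≤ k)
    (h : NestedBalanced k s) {i : ℕ} (hi : i + 1 < k) :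
    ∃ c : ℝ, ∃ᶠ n in atTop,
      (Nat.count (s · = i) n : ℝ) - 2 * Nat.count (s · = i + 1) n = c := by
  induction k, hk using Nat.le_induction generalizing s i with
  | base =>
    obtain rfl | rfl : i = 0 ∨ i = 1 := by omega
    · exact h.frequently_count_zero_sub_two_mul_count_one le_rfl
    · exact h.frequently_count_one_sub_two_mul_count_two
  | succ k hk ih =>
    obtain _ | i := i
    · exact h.frequently_count_zero_sub_two_mul_count_one (by omega)
    · have hs := h.infinite_ne_zero (by omega)
      obtain ⟨c, hc⟩ := ih (h.nestedBalanced_deleteZero (by omega)) (i := i) (by omega)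
      simp only [count_deleteZero hs] at hc
      exact ⟨c, (Nat.nth_strictMono hs).tendsto_atTop.frequently hc⟩

end deleteZero

theorem eq_zero_of_tendsto_div_of_frequently_eq {f : ℕ → ℝ} {a c : ℝ}
    (hf : Tendsto (fun n => f n / n) atTop (𝓝 a)) (hc : ∃ᶠ n in atTop, f n = c) : a = 0 := by
  have hlim : Tendsto (fun n : ℕ => f n / n - c / n) atTop (𝓝 a) := by
    simpa using hf.sub (tendsto_const_div_atTop_nhds_zero_nat c)
  have hzero : ∃ᶠ n : ℕ in atTop, f n / n - c / n ∈ ({0} : Set ℝ) :=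
    hc.mono fun n hn => by simp [hn]
  exact isClosed_singleton.mem_of_frequently_of_tendsto hzero hlim

theorem sum_eq_one_of_tendsto_card_div {α : Type*} [Fintype α] [DecidableEq α] {s : ℕ → α}
    {r : α → ℝ} (h : ∀ a, Tendsto
      (fun n => (((Finset.range n).filter fun t => s t = a).card : ℝ) / n) atTop (𝓝 (r a))) :
    ∑ a, r a = 1 := by
  refine tendsto_nhds_unique (tendsto_finsetSum Finset.univ fun a _ => h a)
    (tendsto_const_nhds.congr' ?_)
  filter_upwards [eventually_gt_atTop 0] with n hn
  rw [← Finset.sum_div, ← Nat.cast_sum, ← Finset.card_eq_sum_card_fiberwise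
    (fun t _ => Finset.mem_coe.2 (Finset.mem_univ (s t))), Finset.card_range, div_self]
  exact_mod_cast hn.ne'

theorem eq_pow_div_geom_sum {K : Type*} [Field K] {m : ℕ} {q : K} {r : Fin (m + 1) → K}
    (hsum : ∑ i, r i = 1) (hratio : ∀ i : Fin m, r i.castSucc = q * r i.succ)
    (i : Fin (m + 1)) : r i = q ^ (m - (i : ℕ)) / ∑ j ∈ Finset.range (m + 1), q ^ j := by
  have eq_mul_last (i : Fin (m + 1)) : r i = q ^ (m - (i : ℕ)) * r (Fin.last m) := by
    induction i using Fin.reverseInduction with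
    | last => simp
    | cast i ih =>
      rw [hratio, ih, ← mul_assoc, ← pow_succ', Fin.val_succ, Fin.val_castSucc]
      congr 2
      omega
  have hgeom : (∑ j ∈ Finset.range (m + 1), q ^ j) * r (Fin.last m) = 1 := by
    rw [← hsum, ← Finset.sum_range_reflect, ← Fin.sum_univ_eq_sum_range
      (fun j => q ^ (m + 1 - 1 - j)), Finset.sum_mul]
    exact Finset.sum_congr rfl fun i _ => (eq_mul_last i).symm
  rw [eq_mul_last i, eq_div_iff (left_ne_zero_of_mul_eq_one hgeom), mul_assoc, mul_comm (r _),
    hgeom, mul_one]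

theorem nestedBalanced_val {k : ℕ} {s : ℕ → Fin k}
    (hbal : ∀ (a : Fin k) (m n len : ℕ),
      |(((Finset.range len).filter (fun t => s (m + t) = a)).card : ℤ) -
        (((Finset.range len).filter (fun t => s (n + t) = a)).card : ℤ)| ≤ 1)
    (hcons : ∀ i : Fin k, ∃ m n : ℕ, m < n ∧ s m = i ∧ s n = i ∧
      ∀ t, m < t → t < n → s t < i) :
    NestedBalanced k fun n => (s n : ℕ) where
  lt n := (s n).isLt
  balanced a ha := isBalanced_iff_abs_card_sub_card_le_one.2 <| by
    simpa only [Fin.ext_iff] using hbal ⟨a, ha⟩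
  nested a ha := by
    simpa only [Fin.ext_iff, Fin.lt_def] using hcons ⟨a, ha⟩

theorem stmt_2_general (k : ℕ) (hk : 3 ≤ k) (s : ℕ → Fin k) (r : Fin k → ℝ)
    (hbal : ∀ (a : Fin k) (m n len : ℕ),
      |(((Finset.range len).filter (fun t => s (m + t) = a)).card : ℤ) -
        (((Finset.range len).filter (fun t => s (n + t) = a)).card : ℤ)| ≤ 1)
    (hdens : ∀ a : Fin k, Tendsto
      (fun n => (((Finset.range n).filter (fun t => s t = a)).card : ℝ) / n) atTop (𝓝 (r a)))
    (hcons : ∀ i : Fin k, ∃ m n : ℕ, m < n ∧ s m = i ∧ s n = i ∧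
      ∀ t, m < t → t < n → s t < i) (i : Fin k) :
    r i = (2 : ℝ) ^ (k - 1 - (i : ℕ)) / ((2 : ℝ) ^ k - 1) := by
  have hs := nestedBalanced_val hbal hcons
  have hcount (a : Fin k) : Tendsto (fun n => (Nat.count (fun t => (s t : ℕ) = a) n : ℝ) / n)
      atTop (𝓝 (r a)) := by
    simpa only [Nat.count_eq_card_filter_range, Fin.val_inj] using hdens a
  obtain ⟨m, rfl⟩ := Nat.exists_eq_add_of_le' (show 1 ≤ k by omega)
  have hratio (j : Fin m) : r j.castSucc = 2 * r j.succ := by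
    obtain ⟨c, hc⟩ := hs.frequently_count_sub_two_mul_count_succ hk (Nat.succ_lt_succ j.isLt)
    refine sub_eq_zero.1 (eq_zero_of_tendsto_div_of_frequently_eq ?_ hc)
    simpa only [sub_div, mul_div_assoc, Fin.val_castSucc, Fin.val_succ] using
      (hcount j.castSucc).sub ((hcount j.succ).const_mul 2)
  rw [eq_pow_div_geom_sum (sum_eq_one_of_tendsto_card_div hdens) hratio i,
    geom_sum_eq (by norm_num)]
  norm_num

/-- An eventually periodic balanced sequence over a `k`-letter alphabet (`k ≥ 3`) with
densities `r 0 > r 1 > ⋯ > r (k-1) > 0`, such that every letter `i` has two consecutive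
occurrences with only smaller letters between them, has densities `2^(k-1-i)/(2^k-1)`. -/
theorem stmt_2 (k : ℕ) (hk : 3 ≤ k) (s : ℕ → Fin k) (r : Fin k → ℝ)
    (hper : ∃ p N : ℕ, 0 < p ∧ ∀ n ≥ N, s (n + p) = s n)
    (hbal : ∀ (a : Fin k) (m n len : ℕ),
      |(((Finset.range len).filter (fun t => s (m + t) = a)).card : ℤ) -
        (((Finset.range len).filter (fun t => s (n + t) = a)).card : ℤ)| ≤ 1)
    (hdens : ∀ a : Fin k, Filter.Tendsto
      (fun n => (((Finset.range n).filter (fun t => s t = a)).card : ℝ) / n)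
      Filter.atTop (nhds (r a)))
    (hmono : ∀ i j : Fin k, i < j → r j < r i) (hpos : ∀ i, 0 < r i)
    (hcons : ∀ i : Fin k, ∃ m n : ℕ, m < n ∧ s m = i ∧ s n = i ∧
      ∀ t, m < t → t < n → s t < i) :
    ∀ i : Fin k, r i = (2:ℝ)^(k-1-(i:ℕ)) / ((2:ℝ)^k - 1) :=
  stmt_2_general k hk s r hbal hdens hcons
end

section
/- Let k ≥ 3 and let α_1 < α_2 < … < α_k be positive reals. Suppose the Beatty sequences {⌊α_i n + α_i/2⌋}_{n=0}^∞, for i = 1,…,k, partition ℕ. Then α_i = (2^k − 1)/2^{k−i} for every 1 ≤ i ≤ k. -/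
/-!
Let `w m` be the index of the sequence that contains `m`. In the word `w`, the number of letters `i`
among the first `M` letters is the integer nearest to `M / α i`. Hence two windows of the same
length contain almost equally many letters `i`, and if the first `i` is at position `p`, then
consecutive letters `i` are `2 * p`, `2 * p + 1` or `2 * p + 2` apart.

As soon as three letters occur, the word must start with `0 1 0`. From there on, the
spacing of each letter, together with the letters already placed, leaves no choice: `w` begins with
`2 ^ k - 1` terms of the ruler sequence and then repeats this block. The frequency `1 / α i` of the
letter `i` can be read off from one period.
-/

/-- `w` is a word in which the letter `i` has asymptotic frequency `r i`, distributed as evenly as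
possible: the number of `i`s among the first `M` letters is the integer nearest to `M * r i`, ties
being rounded down. -/
def IsRoundingWord {ι : Type*} [DecidableEq ι] (w : ℕ → ι) (r : ι → ℝ) : Prop :=
  ∀ (i : ι) (M : ℕ),
    (Nat.count (w · = i) M : ℝ) ∈ Set.Ico (M * r i - 1 / 2) (M * r i + 1 / 2)

theorem floor_mul_add_half_lt_iff {a : ℝ} (ha : 0 < a) {n M : ℕ} :
    ⌊a * n + a / 2⌋ < (M : ℤ) ↔ n < ⌈M * a⁻¹ - 1 / 2⌉₊ := by
  rw [Nat.lt_ceil, Int.floor_lt, lt_sub_iff_add_lt, ← div_eq_mul_inv, lt_div_iff₀ ha,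
    Int.cast_natCast]
  ring_nf

theorem exists_isRoundingWord_of_existsUnique_floor {ι : Type*} [DecidableEq ι] {α : ι → ℝ}
    (hpos : ∀ i, 0 < α i)
    (hpart : ∀ m : ℕ, ∃! p : ι × ℕ, (m : ℤ) = ⌊α p.1 * p.2 + α p.1 / 2⌋) :
    ∃ w, IsRoundingWord w fun i ↦ (α i)⁻¹ := by
  choose p hp p_unique using hpart
  have count_eq (i : ι) (M : ℕ) :
      Nat.count (fun m ↦ (p m).1 = i) M = ⌈M * (α i)⁻¹ - 1 / 2⌉₊ := by
    rw [Nat.count_eq_card_filter_range, ← Finset.card_range ⌈M * (α i)⁻¹ - 1 / 2⌉₊]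
    refine Finset.card_bij (fun m _ ↦ (p m).2) ?_ ?_ ?_
    · intro m hm
      obtain ⟨hmM, rfl⟩ := by simpa using hm
      rw [Finset.mem_range, ← floor_mul_add_half_lt_iff (hpos _), ← hp]
      exact_mod_cast hmM
    · intro m hm m' hm' h
      obtain ⟨-, rfl⟩ := by simpa using hm
      obtain ⟨-, h'⟩ := by simpa using hm'
      have : (m' : ℤ) = ⌊α (p m').1 * (p m').2 + α (p m').1 / 2⌋ := hp m'
      rw [h', ← h, ← hp m] at this
      exact_mod_cast this.symm
    · intro n hn
      rw [Finset.mem_range, ← floor_mul_add_half_lt_iff (hpos i)] at hn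
      have nonneg : 0 ≤ ⌊α i * n + α i / 2⌋ := Int.floor_nonneg.2 (by have := hpos i; positivity)
      obtain ⟨m, hm⟩ := Int.eq_ofNat_of_zero_le nonneg
      have hpm : (i, n) = p m := p_unique m (i, n) hm.symm
      refine ⟨m, ?_, by rw [← hpm]⟩
      rw [Finset.mem_filter, Finset.mem_range, ← hpm]
      exact ⟨by omega, rfl⟩
  refine ⟨fun m ↦ (p m).1, fun i M ↦ ?_⟩
  have h := Nat.ceil_lt_add_one_of_gt_neg_one (a := (M : ℝ) * (α i)⁻¹ - 1 / 2)
  rw [count_eq]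
  have : 0 ≤ (M : ℝ) * (α i)⁻¹ := by have := hpos i; positivity
  refine ⟨Nat.le_ceil _, ?_⟩
  linarith [h (by linarith)]

namespace IsRoundingWord

section Basic

variable {ι : Type*} [DecidableEq ι] {w : ℕ → ι} {r : ι → ℝ} {i j : ι}

theorem comp_injective {κ : Type*} [DecidableEq κ] (hw : IsRoundingWord w r) {f : ι → κ}
    (hf : f.Injective) : IsRoundingWord (f ∘ w) (Function.extend f r 0) := by
  intro c M
  by_cases hc : ∃ i, f i = c
  · obtain ⟨i, rfl⟩ := hc
    simpa only [Function.comp_apply, hf.eq_iff, hf.extend_apply] using hw i M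
  · have count_eq : Nat.count (fun m ↦ (f ∘ w) m = c) M = 0 :=
      Nat.count_iff_forall_not.2 fun m _ h ↦ hc ⟨w m, h⟩
    rw [count_eq, Function.extend_apply' _ _ _ hc]
    norm_num

theorem count_window_mem_Ioo (hw : IsRoundingWord w r) (i : ι) (M L : ℕ) :
    (Nat.count (fun l ↦ w (M + l) = i) L : ℝ) ∈ Set.Ioo (L * r i - 1) (L * r i + 1) := by
  have h₁ := hw i M
  have h₂ := hw i (M + L)
  rw [Nat.count_add] at h₂
  push_cast [Set.mem_Ico] at h₁ h₂
  constructor <;> linarith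

theorem count_le_count (hw : IsRoundingWord w r) (h : r j ≤ r i) (M : ℕ) :
    Nat.count (w · = j) M ≤ Nat.count (w · = i) M := by
  have hj := (hw j M).2
  have hi := (hw i M).1
  have : (M : ℝ) * r j ≤ M * r i := by gcongr
  refine Nat.lt_succ_iff.1 (Nat.cast_lt (α := ℝ).1 ?_)
  push_cast
  linarith

theorem exists_le_eq (hw : IsRoundingWord w r) (h : r i ≤ r j) {m : ℕ} (hm : w m = i) :
    ∃ m' ≤ m, w m' = j := by
  have count_pos : Nat.count (w · = i) (m + 1) ≠ 0 :=
    Nat.count_ne_iff_exists.2 ⟨m, by omega, hm⟩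
  obtain ⟨m', hm', hj⟩ := Nat.count_ne_iff_exists.1
    ((Nat.pos_of_ne_zero count_pos).trans_le (hw.count_le_count h _)).ne'
  exact ⟨m', by omega, hj⟩

theorem exists_isLeast (hw : IsRoundingWord w r) (hi : 0 < r i) :
    ∃ p, IsLeast {m | w m = i} p := by
  obtain ⟨M, hM⟩ := exists_nat_gt (1 / 2 / r i)
  rw [div_lt_iff₀ hi] at hM
  have count_pos : (0 : ℝ) < Nat.count (w · = i) M := by linarith [(hw i M).1]
  obtain ⟨m, -, hm⟩ := Nat.count_ne_iff_exists.1 (Nat.cast_pos.1 count_pos).ne'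
  have hex : ∃ m, w m = i := ⟨m, hm⟩
  exact ⟨Nat.find hex, Nat.find_spec hex, fun _ h ↦ Nat.find_le h⟩

theorem ne_of_rate_eq_zero (hw : IsRoundingWord w r) (hi : r i = 0) (m : ℕ) : w m ≠ i := by
  have h := (hw i (m + 1)).2
  rw [hi, mul_zero] at h
  have count_lt : (Nat.count (w · = i) (m + 1) : ℝ) < 1 := by linarith
  exact Nat.count_iff_forall_not.1 (Nat.lt_one_iff.1 (by exact_mod_cast count_lt)) m m.lt_succ_self

theorem rate_le_of_isLeast (hw : IsRoundingWord w r) {p : ℕ} (hp : IsLeast {m | w m = i} p) :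
    2 * p * r i ≤ 1 := by
  have count_eq : Nat.count (w · = i) p = 0 :=
    Nat.count_iff_forall_not.2 fun _ hm h ↦ (hp.2 h).not_gt hm
  have h := (hw i p).1
  rw [count_eq] at h
  push_cast at h
  linarith

theorem lt_rate_of_isLeast (hw : IsRoundingWord w r) {p : ℕ} (hp : IsLeast {m | w m = i} p) :
    1 < 2 * (p + 1) * r i := by
  have count_pos : 0 < Nat.count (w · = i) (p + 1) :=
    Nat.pos_of_ne_zero (Nat.count_ne_iff_exists.2 ⟨p, by omega, hp.1⟩)
  have h := (hw i (p + 1)).2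
  have : (1 : ℝ) ≤ Nat.count (w · = i) (p + 1) := by exact_mod_cast count_pos
  push_cast at h
  linarith

theorem rate_pos_of_isLeast (hw : IsRoundingWord w r) {p : ℕ} (hp : IsLeast {m | w m = i} p) :
    0 < r i :=
  pos_of_mul_pos_right (one_pos.trans (hw.lt_rate_of_isLeast hp)) (by positivity)

theorem ne_of_mul_rate_le_one (hw : IsRoundingWord w r) {m g : ℕ} (hm : w m = i) (hg : 0 < g)
    (h : (g + 1) * r i ≤ 1) : w (m + g) ≠ i := by
  intro hmg
  have two_le : 2 ≤ Nat.count (fun l ↦ w (m + l) = i) (g + 1) := by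
    rw [Nat.count_succ, if_pos hmg]
    have := Nat.count_ne_iff_exists (p := fun l ↦ w (m + l) = i) (n := g) |>.2 ⟨0, hg, hm⟩
    omega
  have upper := (hw.count_window_mem_Ioo i m (g + 1)).2
  have : (2 : ℝ) ≤ Nat.count (fun l ↦ w (m + l) = i) (g + 1) := by exact_mod_cast two_le
  push_cast at upper
  linarith

theorem exists_next (hw : IsRoundingWord w r) {p m : ℕ} (hp : IsLeast {m | w m = i} p)
    (hm : w m = i) : ∃ g, 0 < g ∧ 2 * p ≤ g ∧ g ≤ 2 * p + 2 ∧ w (m + g) = i := by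
  have lower := (hw.count_window_mem_Ioo i (m + 1) (2 * p + 2)).1
  have hr := hw.lt_rate_of_isLeast hp
  have count_pos : (0 : ℝ) < Nat.count (fun l ↦ w (m + 1 + l) = i) (2 * p + 2) := by
    push_cast at lower ⊢
    linarith
  obtain ⟨l, hl, hwl⟩ := Nat.count_ne_iff_exists.1 (Nat.cast_pos.1 count_pos).ne'
  have hwg : w (m + (l + 1)) = i := by rwa [← add_assoc, add_right_comm]
  refine ⟨l + 1, l.succ_pos, ?_, by omega, hwg⟩
  by_contra! hlp
  refine hw.ne_of_mul_rate_le_one hm l.succ_pos ?_ hwg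
  have : ((l + 1 : ℕ) + 1 : ℝ) ≤ 2 * p := by exact_mod_cast hlp
  nlinarith [hw.rate_le_of_isLeast hp, hw.rate_pos_of_isLeast hp]

theorem mul_rate_eq_of_count_mul (hw : IsRoundingWord w r) {N c : ℕ}
    (h : ∀ q, Nat.count (w · = i) (q * N) = q * c) : N * r i = c := by
  by_contra! hne
  obtain ⟨q, hq⟩ := exists_nat_gt (1 / |N * r i - c|)
  rw [div_lt_iff₀ (abs_pos.2 (sub_ne_zero.2 hne))] at hq
  have bounds := hw i (q * N)
  rw [h, Set.mem_Ico] at bounds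
  push_cast at bounds
  obtain habs | habs := abs_choice (N * r i - c) <;> rw [habs] at hq <;> linarith

end Basic

end IsRoundingWord

/-- The ruler sequence `0, 1, 0, 2, 0, 1, 0, 3, …`, indexed from `0`: the exponent of `2` in
`m + 1`. -/
def ruler (m : ℕ) : ℕ := padicValNat 2 (m + 1)

section Ruler

variable {j l m v : ℕ}

theorem ruler_eq_iff : ruler m = v ↔ ∃ c, m + 1 = 2 ^ v * (2 * c + 1) := by
  have ruler_eq {m v c : ℕ} (h : m + 1 = 2 ^ v * (2 * c + 1)) : ruler m = v := by
    rw [ruler, h, padicValNat.mul (by positivity) (by omega), padicValNat.prime_pow,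
      padicValNat.eq_zero_of_not_dvd (by omega), add_zero]
  refine ⟨?_, fun ⟨_, h⟩ ↦ ruler_eq h⟩
  rintro rfl
  obtain ⟨v, _, ⟨c, rfl⟩, h⟩ := Nat.exists_eq_two_pow_mul_odd m.succ_ne_zero
  exact ⟨c, by rwa [ruler_eq h]⟩

theorem ruler_eq_zero_iff : ruler m = 0 ↔ Even m := by
  rw [ruler_eq_iff, pow_zero]
  exact ⟨fun ⟨c, h⟩ ↦ ⟨c, by omega⟩, fun ⟨c, h⟩ ↦ ⟨c, by omega⟩⟩

theorem ruler_two_mul_add_one (m : ℕ) : ruler (2 * m + 1) = ruler m + 1 := by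
  obtain ⟨c, h⟩ := ruler_eq_iff.1 (rfl : ruler m = ruler m)
  exact ruler_eq_iff.2 ⟨c, by rw [pow_succ']; linarith⟩

theorem ruler_two_pow_sub_one (v : ℕ) : ruler (2 ^ v - 1) = v :=
  ruler_eq_iff.2 ⟨0, by have := Nat.two_pow_pos v; omega⟩

theorem ruler_zero : ruler 0 = 0 := ruler_two_pow_sub_one 0

theorem ruler_one : ruler 1 = 1 := ruler_two_pow_sub_one 1

theorem two_pow_ruler_le (m : ℕ) : 2 ^ ruler m ≤ m + 1 :=
  Nat.le_of_dvd m.succ_pos pow_padicValNat_dvd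

theorem ruler_lt_of_lt_two_pow (h : m + 1 < 2 ^ j) : ruler m < j :=
  (Nat.pow_lt_pow_iff_right one_lt_two).1 ((two_pow_ruler_le m).trans_lt h)

theorem ruler_add_one_ne (m : ℕ) : ruler (m + 1) ≠ ruler m := by
  intro h
  have parity : Even (m + 1) ↔ Even m := by rw [← ruler_eq_zero_iff, h, ruler_eq_zero_iff]
  grind

theorem ruler_add_two_ne (h : ruler m ≠ 0) : ruler (m + 2) ≠ ruler m := by
  obtain ⟨a, rfl⟩ := Nat.not_even_iff_odd.1 (mt ruler_eq_zero_iff.2 h)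
  rw [show 2 * a + 1 + 2 = 2 * (a + 1) + 1 by ring, ruler_two_mul_add_one, ruler_two_mul_add_one]
  exact mt Nat.succ_inj.1 (ruler_add_one_ne a)

theorem exists_ruler_eq_of_ne_two_pow (h : m + 1 ≠ 2 ^ ruler m) :
    ∃ d, m = d + 2 ^ (ruler m + 1) ∧ ruler d = ruler m := by
  obtain ⟨c, hc⟩ := ruler_eq_iff.1 (rfl : ruler m = ruler m)
  obtain _ | c := c
  · exact absurd (by simpa using hc) h
  have : 0 < 2 ^ ruler m * (2 * c + 1) := by positivity
  refine ⟨2 ^ ruler m * (2 * c + 1) - 1, ?_, ruler_eq_iff.2 ⟨c, by omega⟩⟩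
  rw [pow_succ]
  linarith [Nat.sub_add_cancel this]

theorem ruler_two_pow_add (h : l + 1 < 2 ^ j) : ruler (2 ^ j + l) = ruler l := by
  obtain ⟨c, hc⟩ := ruler_eq_iff.1 (rfl : ruler l = ruler l)
  obtain ⟨e, rfl⟩ := Nat.exists_eq_add_of_lt (ruler_lt_of_lt_two_pow h)
  refine ruler_eq_iff.2 ⟨2 ^ e + c, ?_⟩
  rw [add_assoc, hc]
  ring

theorem ruler_eq_of_add_eq_two_pow (h : l + m + 2 = 2 ^ j) : ruler l = ruler m := by
  obtain ⟨c, hc⟩ := ruler_eq_iff.1 (rfl : ruler m = ruler m)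
  obtain ⟨e, rfl⟩ := Nat.exists_eq_add_of_lt (ruler_lt_of_lt_two_pow (by omega : m + 1 < 2 ^ j))
  have split : (l + 1) + 2 ^ ruler m * (2 * c + 1) = 2 ^ ruler m * (2 * 2 ^ e) := by
    rw [← hc]
    linarith [pow_succ 2 (ruler m + e), pow_add 2 (ruler m) e]
  have hce : c < 2 ^ e := by
    by_contra! hle
    have : 2 ^ ruler m * (2 * 2 ^ e) ≤ 2 ^ ruler m * (2 * c + 1) := by gcongr; omega
    omega
  obtain ⟨f, hf⟩ := Nat.exists_eq_add_of_lt hce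
  refine ruler_eq_iff.2 ⟨f, ?_⟩
  rw [hf] at split
  linarith

end Ruler

namespace IsRoundingWord

section Antitone

variable {w : ℕ → ℕ} {r : ℕ → ℝ} {g m p : ℕ}

theorem apply_zero (hw : IsRoundingWord w r) (hr : Antitone r) : w 0 = 0 := by
  obtain ⟨m, hm, h⟩ := hw.exists_le_eq (hr (Nat.zero_le (w 0))) rfl
  rwa [Nat.le_zero.1 hm] at h

theorem eq_zero_of_lt_isLeast_one (hw : IsRoundingWord w r) (hr : Antitone r)
    (hp : IsLeast {m | w m = 1} p) (hm : m < p) : w m = 0 := by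
  by_contra h
  obtain ⟨m', hm', h'⟩ := hw.exists_le_eq (hr (Nat.one_le_iff_ne_zero.2 h)) rfl
  exact (hp.2 h').not_gt (hm'.trans_lt hm)

theorem two_mul_isLeast_one_le_gap (hw : IsRoundingWord w r) (hr : Antitone r)
    (hp : IsLeast {m | w m = 1} p) (hm : w m ≠ 0) (hg : 0 < g) (hmg : w (m + g) ≠ 0) :
    2 * p ≤ g := by
  have prefix_count : Nat.count (w · = 0) p = p :=
    Nat.count_iff_forall.2 fun _ h ↦ hw.eq_zero_of_lt_isLeast_one hr hp h
  have prefix_bound := (hw 0 p).2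
  rw [prefix_count] at prefix_bound
  have window_count : Nat.count (fun l ↦ w (m + l) = 0) (g + 1) < g := by
    rw [Nat.count_succ, if_neg hmg, add_zero]
    exact (Nat.count_le _).lt_of_ne fun h ↦ hm (Nat.count_iff_forall.1 h 0 hg)
  have window_bound := (hw.count_window_mem_Ioo 0 m (g + 1)).1
  have window_count' : (Nat.count (fun l ↦ w (m + l) = 0) (g + 1) : ℝ) + 1 ≤ g := by
    exact_mod_cast window_count
  push_cast at window_bound
  by_contra! hlt
  have hlt' : (g + 1 : ℝ) ≤ 2 * p := by exact_mod_cast hlt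
  have rate_le_one : r 0 ≤ 1 := by
    by_contra! h
    nlinarith [(g.cast_nonneg : (0 : ℝ) ≤ g)]
  have := mul_le_mul_of_nonneg_right hlt' (sub_nonneg.2 rate_le_one)
  linarith

/-- Nonzero letters are at least twice as far apart as `1` is from the start of the word, so the
first `2` fits between two consecutive `1`s only if `1` occurs at the earliest possible place. -/
theorem exists_one_two_one (hw : IsRoundingWord w r) (hr : Antitone r) (h₂ : 0 < r 2) :
    IsLeast {m | w m = 1} 1 ∧ ∃ b, w b = 1 ∧ w (b + 2) = 2 ∧ w (b + 4) = 1 := by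
  obtain ⟨p, hp⟩ := hw.exists_isLeast (h₂.trans_le (hr one_le_two))
  obtain ⟨c, hc, -⟩ := hw.exists_isLeast h₂
  obtain ⟨m, hmc, hm⟩ := hw.exists_le_eq (hr one_le_two) hc
  let b := Nat.findGreatest (w · = 1) c
  have hb : w b = 1 := Nat.findGreatest_spec (P := (w · = 1)) hmc hm
  have hbc : b < c := (Nat.findGreatest_le c).lt_of_ne fun h ↦
    absurd (hb.symm.trans ((congrArg w h).trans hc)) (by norm_num)
  obtain ⟨g, hg, -, hgp, hbg⟩ := hw.exists_next hp hb
  have hcg : c < b + g := by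
    by_contra! h
    exact Nat.findGreatest_is_greatest (by omega : b < b + g) h hbg
  have p_ne_zero : p ≠ 0 := by
    rintro rfl
    exact absurd (hp.1.symm.trans (hw.apply_zero hr)) one_ne_zero
  have gap_left : 2 * p ≤ c - b := by
    refine hw.two_mul_isLeast_one_le_gap hr hp (m := b) (by omega) (by omega) ?_
    rw [Nat.add_sub_cancel' hbc.le, hc]
    exact two_ne_zero
  have gap_right : 2 * p ≤ b + g - c := by
    refine hw.two_mul_isLeast_one_le_gap hr hp (hc.trans_ne two_ne_zero) (by omega) ?_
    rw [Nat.add_sub_cancel' hcg.le, hbg]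
    exact one_ne_zero
  obtain rfl : p = 1 := by omega
  obtain rfl : g = 4 := by omega
  exact ⟨hp, b, hb, by rwa [show b + 2 = c by omega], hbg⟩

theorem isLeast_one (hw : IsRoundingWord w r) (hr : Antitone r) (h₂ : 0 < r 2) :
    IsLeast {m | w m = 1} 1 :=
  (hw.exists_one_two_one hr h₂).1

theorem add_one_eq_zero (hw : IsRoundingWord w r) (hr : Antitone r) (h₂ : 0 < r 2)
    (hm : w m ≠ 0) : w (m + 1) = 0 := by
  by_contra h
  have := hw.two_mul_isLeast_one_le_gap hr (hw.isLeast_one hr h₂) hm one_pos h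
  omega

theorem rate_zero_lt (hw : IsRoundingWord w r) (hr : Antitone r) (h₂ : 0 < r 2) :
    r 0 < 3 / 5 := by
  obtain ⟨-, b, hb, hb₂, hb₄⟩ := hw.exists_one_two_one hr h₂
  have count_le : Nat.count (fun l ↦ w (b + l) = 0) 5 ≤ 2 := by
    simp only [Nat.count_succ, Nat.count_zero, add_zero, hb, hb₂, hb₄]
    grind
  have lower := (hw.count_window_mem_Ioo 0 b 5).1
  have count_le' : (Nat.count (fun l ↦ w (b + l) = 0) 5 : ℝ) ≤ 2 := by exact_mod_cast count_le
  push_cast at lower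
  linarith

theorem rate_one_lt (hw : IsRoundingWord w r) (hr : Antitone r) (h₂ : 0 < r 2) :
    r 1 < 1 / 3 := by
  obtain ⟨-, b, hb, hb₂, -⟩ := hw.exists_one_two_one hr h₂
  have hb₁ : w (b + 1) = 0 := hw.add_one_eq_zero hr h₂ (by omega)
  have hb₃ : w (b + 3) = 0 := hw.add_one_eq_zero hr h₂ (m := b + 2) (by omega)
  have count_eq : Nat.count (fun l ↦ w (b + 1 + l) = 1) 3 = 0 := by
    simp [Nat.count_succ, add_assoc, hb₁, hb₂, hb₃]
  have lower := (hw.count_window_mem_Ioo 1 (b + 1) 3).1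
  rw [count_eq] at lower
  push_cast at lower
  linarith

theorem add_two_ne_one (hw : IsRoundingWord w r) (hr : Antitone r) (h₂ : 0 < r 2)
    (hm : w m = 1) : w (m + 2) ≠ 1 :=
  hw.ne_of_mul_rate_le_one hm two_pos (by push_cast; linarith [hw.rate_one_lt hr h₂])

theorem add_three_or_add_four_eq_one (hw : IsRoundingWord w r) (hr : Antitone r) (h₂ : 0 < r 2)
    (hm : w m = 1) : w (m + 3) = 1 ∨ w (m + 4) = 1 := by
  obtain ⟨g, -, hg₁, hg₂, hwg⟩ := hw.exists_next (hw.isLeast_one hr h₂) hm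
  obtain rfl | rfl | rfl : g = 2 ∨ g = 3 ∨ g = 4 := by omega
  · exact absurd hwg (hw.add_two_ne_one hr h₂ hm)
  · exact Or.inl hwg
  · exact Or.inr hwg

theorem add_two_ne_zero (hw : IsRoundingWord w r) (hr : Antitone r) (h₂ : 0 < r 2)
    (hm : w m = 0) (hm₁ : w (m + 1) = 0) : w (m + 2) ≠ 0 := by
  intro hm₂
  have count_eq : Nat.count (fun l ↦ w (m + l) = 0) 3 = 3 := by
    simp [Nat.count_succ, hm, hm₁, hm₂]
  have upper := (hw.count_window_mem_Ioo 0 m 3).2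
  rw [count_eq] at upper
  push_cast at upper
  linarith [hw.rate_zero_lt hr h₂]

end Antitone

end IsRoundingWord

/-- The factor of length `L` of `w` starting at position `s` is a prefix of the ruler sequence. -/
def ReadsRuler (w : ℕ → ℕ) (s L : ℕ) : Prop :=
  ∀ l < L, w (s + l) = ruler l

theorem ReadsRuler.count_eq {w : ℕ → ℕ} {s L : ℕ} (h : ReadsRuler w s L) (i : ℕ) :
    Nat.count (fun l ↦ w (s + l) = i) L = Nat.count (ruler · = i) L := by
  rw [Nat.count_eq_card_filter_range, Nat.count_eq_card_filter_range]
  congr 1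
  refine Finset.filter_congr fun l hl ↦ ?_
  rw [h l (Finset.mem_range.1 hl)]

theorem count_ruler_eq {i j : ℕ} (h : i < j) :
    Nat.count (ruler · = i) (2 ^ j - 1) = 2 ^ (j - 1 - i) := by
  induction j with
  | zero => omega
  | succ j ih =>
    have hpos := Nat.two_pow_pos j
    have split : 2 ^ (j + 1) - 1 = 2 ^ j + (2 ^ j - 1) := by rw [pow_succ]; omega
    have second_half : ReadsRuler ruler (2 ^ j) (2 ^ j - 1) :=
      fun l hl ↦ ruler_two_pow_add (by omega)
    have first_half : Nat.count (ruler · = i) (2 ^ j) =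
        Nat.count (ruler · = i) (2 ^ j - 1) + if j = i then 1 else 0 := by
      rw [← Nat.sub_add_cancel hpos, Nat.count_succ, Nat.add_sub_cancel, ruler_two_pow_sub_one]
    rw [split, Nat.count_add, second_half.count_eq, first_half]
    obtain hij | rfl := Nat.lt_succ_iff_lt_or_eq.1 h
    · rw [ih hij, if_neg hij.ne', show j + 1 - 1 - i = j - 1 - i + 1 by omega, pow_succ]
      omega
    · have none : Nat.count (ruler · = i) (2 ^ i - 1) = 0 :=
        Nat.count_iff_forall_not.2 fun l hl ↦ (ruler_lt_of_lt_two_pow (by omega)).ne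
      simp [none]

namespace ReadsRuler

section Word

variable {w : ℕ → ℕ} {i j : ℕ}

theorem isLeast_two_pow_sub_one (h : ReadsRuler w 0 (2 ^ j - 1)) (hi : i < j) :
    IsLeast {m | w m = i} (2 ^ i - 1) := by
  have hpow : 2 ^ i < 2 ^ j := Nat.pow_lt_pow_right one_lt_two hi
  have hpos := Nat.two_pow_pos i
  constructor
  · have := h (2 ^ i - 1) (by omega)
    rwa [zero_add, ruler_two_pow_sub_one] at this
  · intro m hm
    by_contra! hlt
    have hruler := h m (by omega)
    rw [zero_add, hm] at hruler
    exact (ruler_lt_of_lt_two_pow (by omega : m + 1 < 2 ^ i)).ne' hruler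

end Word

section RoundingWord

variable {w : ℕ → ℕ} {r : ℕ → ℝ} {j l s v : ℕ}

theorem apply_add_eq_of_ne_two_pow (h : ReadsRuler w s l) (hw : IsRoundingWord w r)
    (hv : IsLeast {m | w m = ruler l} (2 ^ ruler l - 1)) (hl : l + 1 ≠ 2 ^ ruler l) :
    w (s + l) = ruler l := by
  obtain ⟨d, hld, hd⟩ := exists_ruler_eq_of_ne_two_pow hl
  have hpos := Nat.two_pow_pos (ruler l)
  rw [pow_succ] at hld
  have hwd : w (s + d) = ruler l := by rw [h d (by omega), hd]
  obtain ⟨g, hg, hg₁, hg₂, hwg⟩ := hw.exists_next hv hwd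
  obtain hg | hg | hg : d + g + 2 = l ∨ d + g + 1 = l ∨ d + g = l := by omega
  all_goals rw [add_assoc] at hwg
  · rw [h _ (by omega)] at hwg
    have ruler_ne_zero : ruler (d + g) ≠ 0 := by
      intro h₀
      rw [← hwg, h₀] at hg₁ hg₂ hld
      omega
    exact absurd (hg ▸ hwg.symm) (ruler_add_two_ne ruler_ne_zero)
  · rw [h _ (by omega)] at hwg
    exact absurd (hg ▸ hwg.symm) (ruler_add_one_ne (d + g))
  · rwa [hg] at hwg

theorem extend_prefix (h : ReadsRuler w 0 (2 ^ j - 1)) (hw : IsRoundingWord w r)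
    (hj : w (2 ^ j - 1) = j) : ReadsRuler w 0 (2 ^ (j + 1) - 1) := by
  intro l
  induction l using Nat.strong_induction_on with | h l ih =>
  intro hl
  obtain hlt | rfl | hgt := lt_trichotomy l (2 ^ j - 1)
  · exact h l hlt
  · rw [zero_add, hj, ruler_two_pow_sub_one]
  · obtain ⟨l', rfl⟩ : ∃ l', l = 2 ^ j + l' := ⟨l - 2 ^ j, by omega⟩
    have hruler : ruler (2 ^ j + l') < j := by
      rw [ruler_two_pow_add (by omega)]
      exact ruler_lt_of_lt_two_pow (by omega)
    have := Nat.pow_lt_pow_right one_lt_two hruler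
    exact apply_add_eq_of_ne_two_pow (fun m hm ↦ ih m hm (by omega)) hw
      (h.isLeast_two_pow_sub_one hruler) (by omega)

theorem apply_two_pow_sub_one_eq_zero_or_eq (h : ReadsRuler w 0 (2 ^ j - 1))
    (hw : IsRoundingWord w r) (hr : Antitone r) (h₂ : 0 < r 2) :
    w (2 ^ j - 1) = 0 ∨ w (2 ^ j - 1) = j := by
  obtain ⟨i, hi⟩ : ∃ i, w (2 ^ j - 1) = i := ⟨_, rfl⟩
  rw [hi]
  by_contra! ⟨hi₀, hij⟩
  obtain hlt | hgt := hij.lt_or_gt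
  · have hpow : 2 ^ i < 2 ^ j := Nat.pow_lt_pow_right one_lt_two hlt
    have hpos := Nat.two_pow_pos i
    have previous : w (2 ^ j - 1 - 2 ^ i) = i := by
      have := h (2 ^ j - 1 - 2 ^ i) (by omega)
      rwa [zero_add, ruler_eq_of_add_eq_two_pow (m := 2 ^ i - 1) (by omega : _ = 2 ^ j),
        ruler_two_pow_sub_one] at this
    have hprev : 2 ^ j - 1 - 2 ^ i + 2 ^ i = 2 ^ j - 1 := Nat.sub_add_cancel (by omega)
    obtain rfl | hi₁ := eq_or_ne i 1
    · exact hw.add_two_ne_one hr h₂ previous (by rwa [← hprev] at hi)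
    · refine hw.ne_of_mul_rate_le_one previous hpos ?_ (by rwa [hprev])
      have four_le : 2 ^ 2 ≤ 2 ^ i := Nat.pow_le_pow_right two_pos (by omega)
      have four_le' : (4 : ℝ) ≤ 2 ^ i := by exact_mod_cast four_le
      have hrate := hw.rate_le_of_isLeast (h.isLeast_two_pow_sub_one hlt)
      have hrate_pos := hw.rate_pos_of_isLeast (h.isLeast_two_pow_sub_one hlt)
      push_cast [hpos] at hrate ⊢
      nlinarith
  · obtain ⟨m, hm, hmj⟩ := hw.exists_le_eq (hr hgt.le) hi
    obtain rfl | hm := hm.eq_or_lt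
    · exact hij (hi.symm.trans hmj)
    · have hruler := h m hm
      rw [zero_add, hmj] at hruler
      exact (ruler_lt_of_lt_two_pow (by omega : m + 1 < 2 ^ j)).ne' hruler

/-- Otherwise the last `1` before position `s + 2 ^ v` is not followed by another `1` at
distance `3` or `4`, where its spacing requires one. -/
theorem apply_two_pow_add_one_ne (hs : ReadsRuler w (s + 1) (2 ^ v - 1)) (hw : IsRoundingWord w r)
    (hr : Antitone r) (h₂ : 0 < r 2) (hv : v ≠ 0) (hs₀ : w s = 0)
    (hzero : w (s + 2 ^ v) = 0) : w (s + 2 ^ v + 1) ≠ v := by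
  intro hdelay
  obtain rfl | hv₁ := eq_or_ne v 1
  · exact hw.add_two_ne_zero hr h₂ hs₀ (by simpa only [ruler_zero] using hs 0 one_pos) hzero
  have four_le : 2 ^ 2 ≤ 2 ^ v := Nat.pow_le_pow_right two_pos (by omega)
  have previous_one : w (s + 1 + (2 ^ v - 3)) = 1 := by
    rw [hs _ (by omega), ruler_eq_of_add_eq_two_pow (m := 1) (by omega : _ = 2 ^ v), ruler_one]
  have next_zero : w (s + 2 ^ v + 2) = 0 := hw.add_one_eq_zero hr h₂ (by rwa [hdelay])
  obtain hone | hone := hw.add_three_or_add_four_eq_one hr h₂ previous_one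
  · rw [show s + 1 + (2 ^ v - 3) + 3 = s + 2 ^ v + 1 by omega] at hone
    exact hv₁ (hdelay.symm.trans hone)
  · rw [show s + 1 + (2 ^ v - 3) + 4 = s + 2 ^ v + 2 by omega] at hone
    exact absurd (next_zero.symm.trans hone) zero_ne_one

theorem apply_add_two_pow_sub_one (h : ReadsRuler w s (2 ^ j - 1)) (hw : IsRoundingWord w r)
    (hr : Antitone r) (h₂ : 0 < r 2) (h₀ : ReadsRuler w 0 (2 ^ j - 1)) (hv : v ≠ 0)
    (hvj : v < j) (hs : ReadsRuler w (s + (2 ^ j - 1)) (2 ^ v - 1)) :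
    w (s + (2 ^ j - 1) + (2 ^ v - 1)) = v := by
  have hpow : 2 ^ v < 2 ^ j := Nat.pow_lt_pow_right one_lt_two hvj
  have two_le : 2 ^ 1 ≤ 2 ^ v := Nat.pow_le_pow_right two_pos (by omega)
  obtain ⟨t, ht⟩ : ∃ t, s + (2 ^ j - 1) = t + 1 := ⟨s + (2 ^ j - 2), by omega⟩
  have last_zero : w t = 0 := by
    have := h (2 ^ j - 2) (by omega)
    rwa [ruler_eq_of_add_eq_two_pow (m := 0) (by omega : _ = 2 ^ j), ruler_zero,
      show s + (2 ^ j - 2) = t by omega] at this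
  have previous : w (t + 1 - 2 ^ v) = v := by
    have := h (2 ^ j - 1 - 2 ^ v) (by omega)
    rwa [ruler_eq_of_add_eq_two_pow (m := 2 ^ v - 1) (by omega : _ = 2 ^ j),
      ruler_two_pow_sub_one, show s + (2 ^ j - 1 - 2 ^ v) = t + 1 - 2 ^ v by omega] at this
  rw [ht] at hs ⊢
  rw [show t + 1 + (2 ^ v - 1) = t + 2 ^ v by omega]
  obtain ⟨g, -, hg₁, hg₂, hwg⟩ := hw.exists_next (h₀.isLeast_two_pow_sub_one hvj) previous
  obtain hg | hg | hg : t + 1 - 2 ^ v + g = t + 1 + (2 ^ v - 2) ∨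
      t + 1 - 2 ^ v + g = t + 2 ^ v ∨ t + 1 - 2 ^ v + g = t + 2 ^ v + 1 := by omega
  all_goals rw [hg] at hwg
  · rw [hs _ (by omega), ruler_eq_of_add_eq_two_pow (m := 0) (by omega : _ = 2 ^ v),
      ruler_zero] at hwg
    exact absurd hwg.symm hv
  · exact hwg
  · by_cases hzero : w (t + 2 ^ v) = 0
    · exact absurd hwg (hs.apply_two_pow_add_one_ne hw hr h₂ hv last_zero hzero)
    · exact absurd (hwg.symm.trans (hw.add_one_eq_zero hr h₂ hzero)) hv

theorem next_block (h : ReadsRuler w s (2 ^ j - 1)) (hw : IsRoundingWord w r) (hr : Antitone r)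
    (h₂ : 0 < r 2) (h₀ : ReadsRuler w 0 (2 ^ j - 1)) (hzero : w (s + (2 ^ j - 1)) = 0) :
    ReadsRuler w (s + (2 ^ j - 1)) (2 ^ j - 1) := by
  intro l
  induction l using Nat.strong_induction_on with | h l ih =>
  intro hl
  have hs : ReadsRuler w (s + (2 ^ j - 1)) l := fun m hm ↦ ih m hm (hm.trans hl)
  have hlt : ruler l < j := ruler_lt_of_lt_two_pow (by omega)
  by_cases hpow : l + 1 = 2 ^ ruler l
  · obtain hv | hv := eq_or_ne (ruler l) 0
    · obtain rfl : l = 0 := by simpa [hv] using hpow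
      rw [add_zero, hzero, ruler_zero]
    · obtain hl' : l = 2 ^ ruler l - 1 := by omega
      have := h.apply_add_two_pow_sub_one hw hr h₂ h₀ hv hlt (hl' ▸ hs)
      rwa [← hl'] at this
  · exact hs.apply_add_eq_of_ne_two_pow hw (h₀.isLeast_two_pow_sub_one hlt) hpow

theorem apply_add_two_eq_one (h : ReadsRuler w s (2 ^ j - 1)) (hw : IsRoundingWord w r)
    (hr : Antitone r) (h₂ : 0 < r 2) (hj : 2 ≤ j) (hne : w (s + (2 ^ j - 1)) ≠ 0) :
    w (s + (2 ^ j - 1) + 2) = 1 := by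
  have four_le : 2 ^ 2 ≤ 2 ^ j := Nat.pow_le_pow_right two_pos hj
  have next_zero : w (s + (2 ^ j - 1) + 1) = 0 := hw.add_one_eq_zero hr h₂ hne
  have previous_one : w (s + (2 ^ j - 3)) = 1 := by
    rw [h _ (by omega), ruler_eq_of_add_eq_two_pow (m := 1) (by omega : _ = 2 ^ j), ruler_one]
  obtain hone | hone := hw.add_three_or_add_four_eq_one hr h₂ previous_one
  · rw [show s + (2 ^ j - 3) + 3 = s + (2 ^ j - 1) + 1 by omega] at hone
    exact absurd (next_zero.symm.trans hone) zero_ne_one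
  · rwa [show s + (2 ^ j - 3) + 4 = s + (2 ^ j - 1) + 2 by omega] at hone

/-- Otherwise the block is continued by `x 0 1` with `x ≠ 0`, and the window from its second letter
to that `1` contains so few zeros that `0` is rarer than the first `2 ^ j` letters of the word
allow. -/
theorem next_block_apply_zero (h : ReadsRuler w s (2 ^ j - 1)) (hw : IsRoundingWord w r)
    (hr : Antitone r) (h₂ : 0 < r 2) (hj : 2 ≤ j) (h₀ : ReadsRuler w 0 (2 ^ j - 1))
    (hzero : w (2 ^ j - 1) = 0) : w (s + (2 ^ j - 1)) = 0 := by
  by_contra hne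
  have next_zero : w (s + (2 ^ j - 1) + 1) = 0 := hw.add_one_eq_zero hr h₂ hne
  have next_one : w (s + (2 ^ j - 1) + 2) = 1 := h.apply_add_two_eq_one hw hr h₂ hj hne
  have hpos := Nat.two_pow_pos j
  have prefix_count : Nat.count (w · = 0) (2 ^ j) = 2 ^ (j - 1) + 1 := by
    have block_count := h₀.count_eq 0
    simp only [zero_add] at block_count
    rw [← Nat.sub_add_cancel hpos, Nat.count_succ, block_count, count_ruler_eq (by omega),
      if_pos hzero, tsub_zero]
  have window_count : Nat.count (fun l ↦ w (s + 1 + l) = 0) (2 ^ j + 1) = 2 ^ (j - 1) := by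
    have first_zero : w (s + 0) = 0 := by
      rw [h 0 (by have := Nat.one_lt_two_pow (n := j) (by omega); omega), ruler_zero]
    have tail_count : Nat.count (fun l ↦ w (s + (2 ^ j - 1 + l)) = 0) 3 = 1 := by
      simp [Nat.count_succ, ← add_assoc, hne, next_zero, next_one]
    have drop_first := Nat.count_succ' (fun l ↦ w (s + l) = 0) (2 ^ j + 1)
    rw [show 2 ^ j + 1 + 1 = 2 ^ j - 1 + 3 by omega, Nat.count_add, h.count_eq, tail_count,
      count_ruler_eq (by omega), if_pos first_zero] at drop_first
    simpa only [add_assoc, add_comm 1, tsub_zero] using (Nat.succ_injective drop_first).symm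
  have prefix_bound := (hw 0 (2 ^ j)).2
  have window_bound := (hw.count_window_mem_Ioo 0 (s + 1) (2 ^ j + 1)).1
  rw [prefix_count] at prefix_bound
  rw [window_count] at window_bound
  have half : (2 : ℝ) ^ j = 2 * 2 ^ (j - 1) := (mul_pow_sub_one (by omega) 2).symm
  have half_pos : (0 : ℝ) < 2 ^ (j - 1) := by positivity
  push_cast [half] at prefix_bound window_bound
  nlinarith

theorem periodic_of_apply_eq_zero (h₀ : ReadsRuler w 0 (2 ^ j - 1)) (hw : IsRoundingWord w r)
    (hr : Antitone r) (h₂ : 0 < r 2) (hj : 2 ≤ j) (hzero : w (2 ^ j - 1) = 0) (q : ℕ) :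
    ReadsRuler w (q * (2 ^ j - 1)) (2 ^ j - 1) := by
  induction q with
  | zero => rwa [zero_mul]
  | succ q ih =>
    rw [add_one_mul]
    exact ih.next_block hw hr h₂ h₀ (ih.next_block_apply_zero hw hr h₂ hj h₀ hzero)

end RoundingWord

section Periodic

variable {w : ℕ → ℕ} {j : ℕ}

theorem apply_lt_of_periodic (h : ∀ q, ReadsRuler w (q * (2 ^ j - 1)) (2 ^ j - 1)) (hj : j ≠ 0)
    (m : ℕ) : w m < j := by
  have hpos : 0 < 2 ^ j - 1 := Nat.sub_pos_of_lt (Nat.one_lt_two_pow hj)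
  have hmod := Nat.mod_lt m hpos
  rw [← Nat.div_add_mod' m (2 ^ j - 1), h _ _ hmod]
  exact ruler_lt_of_lt_two_pow (by omega)

theorem count_of_periodic (h : ∀ q, ReadsRuler w (q * (2 ^ j - 1)) (2 ^ j - 1)) {i : ℕ}
    (hi : i < j) (q : ℕ) : Nat.count (w · = i) (q * (2 ^ j - 1)) = q * 2 ^ (j - 1 - i) := by
  induction q with
  | zero => simp
  | succ q ih => rw [add_one_mul, Nat.count_add, ih, (h q).count_eq, count_ruler_eq hi, add_one_mul]

end Periodic

end ReadsRuler

namespace IsRoundingWord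

section Antitone

variable {w : ℕ → ℕ} {r : ℕ → ℝ} {j : ℕ}

theorem readsRuler (hw : IsRoundingWord w r) (hr : Antitone r) (h₂ : 0 < r 2) (hj : 2 ≤ j)
    (hpos : 0 < r (j - 1)) : ReadsRuler w 0 (2 ^ j - 1) := by
  induction j, hj using Nat.le_induction with
  | base =>
    have h₀ := hw.apply_zero hr
    have h₁ : w 1 = 1 := (hw.isLeast_one hr h₂).1
    have base : ReadsRuler w 0 (2 ^ 1 - 1) := by
      intro l hl
      obtain rfl : l = 0 := by omega
      rw [h₀, ruler_zero]
    exact base.extend_prefix hw h₁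
  | succ j hj ih =>
    rw [Nat.add_sub_cancel] at hpos
    have hprefix := ih (hpos.trans_le (hr (Nat.sub_le j 1)))
    obtain hzero | hnext := hprefix.apply_two_pow_sub_one_eq_zero_or_eq hw hr h₂
    · obtain ⟨m, hm, -⟩ := hw.exists_isLeast hpos
      have hperiodic := hprefix.periodic_of_apply_eq_zero hw hr h₂ hj hzero
      exact absurd hm (ReadsRuler.apply_lt_of_periodic hperiodic (by omega) m).ne
    · exact hprefix.extend_prefix hw hnext

theorem mul_rate_eq (hw : IsRoundingWord w r) (hr : Antitone r) (h₂ : 0 < r 2)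
    (hpos : 0 < r (j - 1)) (hzero : r j = 0) {i : ℕ} (hi : i < j) :
    (2 ^ j - 1) * r i = 2 ^ (j - 1 - i) := by
  have hj : 2 ≤ j := (hr.reflect_lt (hzero.trans_lt h₂)).le
  have hprefix := hw.readsRuler hr h₂ hj hpos
  have next_zero := (hprefix.apply_two_pow_sub_one_eq_zero_or_eq hw hr h₂).resolve_right
    (hw.ne_of_rate_eq_zero hzero _)
  have h := hw.mul_rate_eq_of_count_mul
    (ReadsRuler.count_of_periodic (hprefix.periodic_of_apply_eq_zero hw hr h₂ hj next_zero) hi)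
  push_cast [Nat.one_le_two_pow] at h
  exact h

end Antitone

end IsRoundingWord

theorem antitone_extend_val {β : Type*} [Preorder β] [Zero β] {k : ℕ} {f : Fin k → β}
    (hf : Antitone f) (hf_nonneg : ∀ i, 0 ≤ f i) :
    Antitone (Function.extend Fin.val f (0 : ℕ → β)) := by
  have extend_of_lt {a : ℕ} (ha : a < k) : Function.extend Fin.val f (0 : ℕ → β) a = f ⟨a, ha⟩ :=
    Fin.val_injective.extend_apply f 0 ⟨a, ha⟩
  have extend_of_ge {a : ℕ} (ha : k ≤ a) : Function.extend Fin.val f (0 : ℕ → β) a = 0 :=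
    Function.extend_apply' _ _ _ fun ⟨i, hi⟩ ↦ (i.isLt.trans_le ha).ne hi
  intro a b hab
  obtain hb | hb := lt_or_ge b k
  · rw [extend_of_lt hb, extend_of_lt (hab.trans_lt hb)]
    exact hf hab
  rw [extend_of_ge hb]
  obtain ha | ha := lt_or_ge a k
  · rw [extend_of_lt ha]
    exact hf_nonneg _
  · rw [extend_of_ge ha]

/-- Fraenkel's conjecture in the special case `β i = α i / 2`: if the Beatty sequences
`⌊α i * n + α i / 2⌋` partition ℕ, then `α i = (2^k - 1)/2^(k-i)`. -/
theorem stmt_3 (k : ℕ) (hk : 3 ≤ k) (α : Fin k → ℝ) (hpos : ∀ i, 0 < α i)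
    (hmono : StrictMono α)
    (hpart : ∀ m : ℕ, ∃! p : Fin k × ℕ, (m : ℤ) = ⌊α p.1 * p.2 + α p.1 / 2⌋) :
    ∀ i : Fin k, α i = ((2:ℝ)^k - 1) / (2:ℝ)^(k-1-(i:ℕ)) := by
  obtain ⟨w, hw⟩ := exists_isRoundingWord_of_existsUnique_floor hpos hpart
  have hwℕ := hw.comp_injective Fin.val_injective
  set r : ℕ → ℝ := Function.extend Fin.val (fun i ↦ (α i)⁻¹) 0
  have hr : Antitone r := antitone_extend_val (f := fun i ↦ (α i)⁻¹)
    (fun i j hij ↦ inv_anti₀ (hpos i) (hmono.monotone hij)) fun i ↦ (inv_pos.2 (hpos i)).le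
  have r_apply (i : Fin k) : r i = (α i)⁻¹ := Fin.val_injective.extend_apply _ _ i
  have r_pos {i : ℕ} (hi : i < k) : 0 < r i := by
    have := inv_pos.2 (hpos ⟨i, hi⟩)
    rwa [← r_apply] at this
  have r_k : r k = 0 := Function.extend_apply' _ _ _ fun ⟨i, hi⟩ ↦ i.isLt.ne hi
  intro i
  have h := hwℕ.mul_rate_eq hr (r_pos hk) (r_pos (by omega)) r_k i.isLt
  rw [r_apply, ← div_eq_mul_inv, div_eq_iff (hpos i).ne'] at h
  rw [h, mul_div_cancel_left₀ _ (by positivity)]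
end

section
/- Let k ≥ 3 and let α_1 < … < α_k be positive reals with β_i = α_i/2, and suppose the Beatty sequences {⌊α_i n + α_i/2⌋}_{n=0}^∞ partition ℕ. Then each α_i is rational. -/
/-!
Suppose `⌊a n + a / 2⌋`, with `a < 2`, avoids `⌊b n + b / 2⌋`. The integers missed by the first
sequence are terms `⌈c l + c / 2⌉ - 1` of the sequence with complementary slope `c`,
`1 / a + 1 / c = 1`. Since `c > 2`, the progression `b n + b / 2` follows `c l + c / 2` closely
and, when `b` is irrational, density modulo one forces the first to be contained in the second:
`b` is an odd multiple of `c`. Two odd multiples of `c` give intersecting sequences, so besides `a`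
there is room for only one irrational slope. Finally, one irrational slope makes all the others
irrational, because its sequence visits every residue class of every modulus.
-/

open Filter Set Function

section Density

theorem frequently_mul_sub_int_mul_mem_Ioo {a p u v : ℝ} (hp : 0 < p) (h : Irrational (a / p))
    (huv : u < v) : ∃ᶠ n : ℕ in atTop, ∃ l : ℤ, a * n - p * l ∈ Ioo u v := by
  have : Fact (0 < p) := ⟨hp⟩
  refine frequently_atTop.2 fun N => ?_
  have hdense : DenseRange fun n : ℕ => n • (a : AddCircle p) :=
    denseRange_zsmul_iff_nsmul.1 (AddCircle.denseRange_zsmul_coe_iff.2 h)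
  have hopen : IsOpen ((fun y : ℝ => (y : AddCircle p)) '' Ioo (u - a * N) (v - a * N)) :=
    QuotientAddGroup.isOpenMap_coe _ isOpen_Ioo
  obtain ⟨n, y, hy, hyn⟩ := hdense.exists_mem_open hopen
    ((nonempty_Ioo.2 (sub_lt_sub_right huv _)).image _)
  obtain ⟨l, hl⟩ := (AddCircle.coe_eq_zero_iff p (x := n • a - y)).1 <| by
    rw [AddCircle.coe_sub, AddCircle.coe_nsmul, sub_eq_zero]
    exact hyn.symm
  refine ⟨N + n, Nat.le_add_right N n, l, ?_⟩
  have hy_eq : a * (N + n : ℕ) - p * l = y + a * N := by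
    rw [zsmul_eq_mul, nsmul_eq_mul] at hl
    push_cast
    linear_combination -hl
  rw [hy_eq]
  exact ⟨sub_lt_iff_lt_add.1 hy.1, lt_sub_iff_add_lt.1 hy.2⟩

theorem frequently_floor_modEq {a : ℝ} (ha : Irrational a) (β : ℝ) {m : ℤ} (hm : 0 < m) (r : ℤ) :
    ∃ᶠ n : ℕ in atTop, ⌊a * n + β⌋ ≡ r [ZMOD m] := by
  refine (frequently_mul_sub_int_mul_mem_Ioo (Int.cast_pos.2 hm) (ha.div_intCast hm.ne')
    (show (r - β : ℝ) < r + 1 - β by linarith)).mono ?_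
  rintro n ⟨l, hl, hu⟩
  have hfloor : ⌊a * n + β⌋ = r + m * l := by
    rw [Int.floor_eq_iff]
    push_cast
    constructor <;> linarith
  rw [hfloor]
  exact Int.modEq_add_fac_self

theorem exists_floor_eq_and_sub_mem_Ioo {a : ℝ} (ha : Irrational a) (β : ℝ) {u v : ℝ} (hu : 0 ≤ u)
    (huv : u < v) (hv : v ≤ 1) :
    ∃ (n : ℕ) (m : ℤ), ⌊a * n + β⌋ = m ∧ a * n + β - m ∈ Ioo u v := by
  obtain ⟨n, m, hl, hr⟩ := (frequently_mul_sub_int_mul_mem_Ioo one_pos (by simpa using ha)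
    (sub_lt_sub_right huv β)).exists
  refine ⟨n, m, Int.floor_eq_iff.2 ⟨?_, ?_⟩, ?_, ?_⟩ <;> linarith

end Density

section Tracking

variable {b c β γ r : ℝ}

theorem abs_sub_le_one_of_ceil_eq_floor_add_one {x y : ℝ} (h : ⌈y⌉ = ⌊x⌋ + 1) : |y - x| ≤ 1 := by
  obtain ⟨hly, hyu⟩ := Int.ceil_eq_iff.1 h
  push_cast at hly hyu
  rw [abs_le]
  constructor <;> linarith [Int.floor_le x, Int.lt_floor_add_one x]

theorem int_eq_of_abs_mul_sub_le {x : ℝ} {k l : ℤ} (hr : 2 * r < c) (hk : |c * k - x| ≤ r)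
    (hl : |c * l - x| ≤ r) : k = l := by
  have hc : 0 < c := by linarith [(abs_nonneg _).trans hk]
  have hdist : c * |(k - l : ℝ)| < c * 1 := calc
    c * |(k - l : ℝ)| = |(c * k - x) - (c * l - x)| := by
      rw [sub_sub_sub_cancel_right, ← mul_sub, abs_mul, abs_of_pos hc]
    _ ≤ |c * k - x| + |c * l - x| := abs_sub _ _
    _ < c * 1 := by linarith
  have hlt : |k - l| < 1 := by exact_mod_cast lt_of_mul_lt_mul_left hdist hc.le
  exact sub_eq_zero.1 (Int.abs_lt_one_iff.1 hlt)

theorem not_irrational_div_of_forall_exists_abs_sub_le (hr : 2 * r < c)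
    (h : ∀ n : ℕ, ∃ l : ℤ, |c * l + γ - (b * n + β)| ≤ r) : ¬ Irrational (b / c) := by
  intro hirr
  have hc : 0 < c := by
    obtain ⟨l, hl⟩ := h 0
    linarith [(abs_nonneg _).trans hl]
  obtain ⟨n, k, hlow, hupp⟩ := (frequently_mul_sub_int_mul_mem_Ioo hc hirr
    (show r + γ - β < c - r + γ - β by linarith)).exists
  obtain ⟨l, hl⟩ := h n
  rw [abs_le] at hl
  have hkl : (k : ℝ) < l := lt_of_mul_lt_mul_left (by linarith) hc.le
  have hlk : (l : ℝ) < k + 1 := lt_of_mul_lt_mul_left (by linarith) hc.le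
  norm_cast at hkl hlk
  omega

theorem eq_zero_of_forall_ceil_add_eq_floor_add_one {δ : ℝ} (hb : Irrational b)
    (h : ∀ n : ℕ, ⌈b * n + β + δ⌉ = ⌊b * n + β⌋ + 1) : δ = 0 := by
  rcases lt_trichotomy δ 0 with hneg | hzero | hpos
  · obtain ⟨n, m, hm, -, hlt⟩ := exists_floor_eq_and_sub_mem_Ioo hb β le_rfl
      (lt_min (neg_pos.2 hneg) one_pos) (min_le_right _ _)
    have hceil := Int.ceil_eq_iff.1 ((h n).trans (congrArg (· + 1) hm))
    push_cast at hceil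
    linarith [min_le_left (-δ) 1]
  · exact hzero
  · obtain ⟨n, m, hm, hlt, -⟩ := exists_floor_eq_and_sub_mem_Ioo hb β (le_max_right (1 - δ) 0)
      (max_lt (sub_lt_self 1 hpos) one_pos) le_rfl
    have hceil := Int.ceil_eq_iff.1 ((h n).trans (congrArg (· + 1) hm))
    push_cast at hceil
    linarith [le_max_left (1 - δ) 0]

theorem exists_mul_add_eq_of_forall_exists_ceil_eq_floor_add_one (hb : Irrational b) (hc : 2 < c)
    (h : ∀ n : ℕ, ∃ l : ℤ, ⌈c * l + γ⌉ = ⌊b * n + β⌋ + 1) : ∃ l : ℤ, c * l + γ = β := by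
  have hdist (n : ℕ) (l : ℤ) (hl : ⌈c * l + γ⌉ = ⌊b * n + β⌋ + 1) :
      |c * l + γ - (b * n + β)| ≤ 1 := abs_sub_le_one_of_ceil_eq_floor_add_one hl
  obtain ⟨q, hq⟩ : ∃ q : ℚ, (q : ℝ) = b / c := not_not.1 <|
    not_irrational_div_of_forall_exists_abs_sub_le (by linarith) fun n =>
      (h n).imp (hdist n)
  have hperiod : b * q.den = c * q.num := by
    have hqd : (q : ℝ) * q.den = q.num := by exact_mod_cast Rat.mul_den_eq_num q
    rw [← hqd, hq]
    field_simp
  obtain ⟨l₀, hl₀⟩ := h 0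
  -- Along the multiples of `q.den` the offset `c * l + γ - (b * n + β)` is constant.
  refine ⟨l₀, sub_eq_zero.1 <| eq_zero_of_forall_ceil_add_eq_floor_add_one (β := β)
    (hb.mul_natCast q.den_ne_zero) fun t => ?_⟩
  obtain ⟨l, hl⟩ := h (q.den * t)
  have hterm : b * (q.den * t : ℕ) = b * q.den * t := by push_cast; ring
  have hl_eq : l = l₀ + q.num * t := by
    refine int_eq_of_abs_mul_sub_le (c := c) (r := 1) (x := b * q.den * t + β - γ)
      (by linarith) ?_ ?_
    · convert hdist _ l hl using 2
      rw [hterm]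
      ring
    · convert hdist 0 l₀ hl₀ using 2
      push_cast
      linear_combination -t * hperiod
  rw [hterm, hl_eq] at hl
  rw [← hl]
  congr 1
  push_cast
  linear_combination t * hperiod

end Tracking

/-- The inhomogeneous Beatty sequence of slope `a` whose shift is half the slope, indexed from
`n = 0`. -/
noncomputable def halfBeattySeq (a : ℝ) (n : ℕ) : ℤ :=
  ⌊a * n + a / 2⌋

section HalfBeatty

variable {a b : ℝ}

theorem halfBeattySeq_nonneg (ha : 0 ≤ a) (n : ℕ) : 0 ≤ halfBeattySeq a n :=
  Int.floor_nonneg.2 (by positivity)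

theorem lt_two_of_halfBeattySeq_eq_zero (ha : 0 ≤ a) {n : ℕ} (h : halfBeattySeq a n = 0) :
    a < 2 := by
  have hlt : a * n + a / 2 < 1 := (Int.floor_eq_zero_iff.1 h).2
  linarith [mul_nonneg ha n.cast_nonneg]

theorem halfBeattySeq_odd_mul_comm (c : ℝ) (k l : ℕ) :
    halfBeattySeq ((2 * k + 1) * c) l = halfBeattySeq ((2 * l + 1) * c) k := by
  unfold halfBeattySeq
  congr 1
  ring

theorem mem_range_halfBeattySeq_of_modEq {q : ℚ} (hq : 0 < q) {m : ℤ} (hm : ⌊(q : ℝ) / 2⌋ ≤ m)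
    (hmod : m ≡ ⌊(q : ℝ) / 2⌋ [ZMOD q.num]) : m ∈ range (halfBeattySeq q) := by
  obtain ⟨l, hl⟩ := hmod.symm.dvd
  have hl_nonneg : 0 ≤ l := nonneg_of_mul_nonneg_right (hl ▸ sub_nonneg.2 hm) (Rat.num_pos.2 hq)
  lift l to ℕ using hl_nonneg
  have hqd : (q : ℝ) * q.den = q.num := by exact_mod_cast Rat.mul_den_eq_num q
  refine ⟨q.den * l, ?_⟩
  have hterm : (q : ℝ) * (q.den * l : ℕ) + q / 2 = ((q.num * l : ℤ) : ℝ) + q / 2 := by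
    push_cast
    linear_combination (l : ℝ) * hqd
  rw [halfBeattySeq, hterm, Int.floor_intCast_add, ← hl, sub_add_cancel]

theorem irrational_of_disjoint_range_halfBeattySeq (ha : 0 < a) (hb : 0 < b)
    (hdisj : Disjoint (range (halfBeattySeq a)) (range (halfBeattySeq b))) (hirr : Irrational a) :
    Irrational b := by
  rintro ⟨q, rfl⟩
  have hq : 0 < q := by exact_mod_cast hb
  have hlarge : ∀ᶠ n : ℕ in atTop, ⌊(q : ℝ) / 2⌋ ≤ halfBeattySeq a n :=
    (tendsto_floor_atTop.comp <| tendsto_atTop_add_const_right _ _ <|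
      tendsto_natCast_atTop_atTop.const_mul_atTop ha).eventually_ge_atTop _
  obtain ⟨n, hmod, hn⟩ := ((frequently_floor_modEq hirr (a / 2) (Rat.num_pos.2 hq)
    ⌊(q : ℝ) / 2⌋).and_eventually hlarge).exists
  exact disjoint_left.1 hdisj (mem_range_self n) (mem_range_halfBeattySeq_of_modEq hq hn hmod)

theorem exists_gap_of_notMem_range_halfBeattySeq (ha : 0 < a) {m : ℤ} (hm : 0 ≤ m)
    (hmem : m ∉ range (halfBeattySeq a)) :
    ∃ n : ℕ, a * n - a / 2 < m ∧ m + 1 ≤ a * n + a / 2 := by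
  have hm_div : 0 ≤ (m : ℝ) / a := div_nonneg (Int.cast_nonneg hm) ha.le
  set n : ℕ := ⌈(m : ℝ) / a - 1 / 2⌉₊
  have hbelow : a * n - a / 2 < m := by
    have hn : (n : ℝ) - 1 / 2 < m / a := by
      linarith [Nat.ceil_lt_add_one_of_gt_neg_one (show -1 < (m : ℝ) / a - 1 / 2 by linarith)]
    linarith [(lt_div_iff₀ ha).1 hn]
  have habove : m ≤ a * n + a / 2 := by
    have hn : (m : ℝ) / a ≤ n + 1 / 2 := by linarith [Nat.le_ceil ((m : ℝ) / a - 1 / 2)]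
    linarith [(div_le_iff₀ ha).1 hn]
  refine ⟨n, hbelow, ?_⟩
  by_contra! hlt
  exact hmem ⟨n, Int.floor_eq_iff.2 ⟨habove, hlt⟩⟩

theorem one_lt_of_notMem_range_halfBeattySeq (ha : 0 < a) {m : ℤ} (hm : 0 ≤ m)
    (hmem : m ∉ range (halfBeattySeq a)) : 1 < a := by
  obtain ⟨n, hlow, hupp⟩ := exists_gap_of_notMem_range_halfBeattySeq ha hm hmem
  linarith

theorem exists_ceil_eq_add_one_of_notMem_range_halfBeattySeq {c : ℝ} (hac : a.HolderConjugate c)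
    {m : ℤ} (hm : 0 ≤ m) (hmem : m ∉ range (halfBeattySeq a)) :
    ∃ l : ℤ, ⌈c * l + c / 2⌉ = m + 1 := by
  obtain ⟨n, hlow, hupp⟩ := exists_gap_of_notMem_range_halfBeattySeq hac.pos hm hmem
  refine ⟨m - n, Int.ceil_eq_iff.2 ?_⟩
  have hlow_eq : c * (m - n : ℤ) + c / 2 = m + (m - (a * n - a / 2)) * (c - 1) := by
    push_cast
    linear_combination (n - 1 / 2 : ℝ) * hac.mul_eq_add
  have hupp_eq : c * (m - n : ℤ) + c / 2 = m + 1 - (a * n + a / 2 - (m + 1)) * (c - 1) := by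
    push_cast
    linear_combination (n + 1 / 2 : ℝ) * hac.mul_eq_add
  push_cast at hlow_eq hupp_eq ⊢
  constructor
  · linarith [mul_pos (sub_pos.2 hlow) hac.symm.sub_one_pos]
  · linarith [mul_nonneg (sub_nonneg.2 hupp) hac.symm.sub_one_pos.le]

theorem exists_eq_odd_mul_of_disjoint_range_halfBeattySeq {c : ℝ} (hac : a.HolderConjugate c)
    (ha2 : a < 2) (hb : 0 < b) (hirr : Irrational b)
    (hdisj : Disjoint (range (halfBeattySeq a)) (range (halfBeattySeq b))) :
    ∃ l : ℕ, b = (2 * l + 1) * c := by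
  have hc2 : 2 < c := by
    by_contra! hc
    linarith [hac.sub_one_mul_conj, mul_le_mul_of_nonneg_left hc hac.sub_one_pos.le]
  obtain ⟨l, hl⟩ := exists_mul_add_eq_of_forall_exists_ceil_eq_floor_add_one hirr hc2 fun n =>
    exists_ceil_eq_add_one_of_notMem_range_halfBeattySeq hac (halfBeattySeq_nonneg hb.le n)
      (disjoint_right.1 hdisj (mem_range_self n))
  have hl_nonneg : 0 ≤ l := by
    have hpos : 0 < c * (l + 1 / 2 : ℝ) := by linarith
    have hlt : (-1 : ℝ) < l := by linarith [pos_of_mul_pos_right hpos hac.symm.nonneg]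
    exact Int.add_one_le_iff.2 (by exact_mod_cast hlt)
  lift l to ℕ using hl_nonneg
  refine ⟨l, ?_⟩
  push_cast at hl
  linear_combination -2 * hl

end HalfBeatty

theorem pairwise_disjoint_range_of_forall_existsUnique {ι κ : Type*} {f : ι → κ → ℤ}
    (hf : ∀ i n, 0 ≤ f i n) (h : ∀ m : ℕ, ∃! p : ι × κ, (m : ℤ) = f p.1 p.2) :
    Pairwise (Disjoint on fun i => range (f i)) := by
  intro i j hij
  refine disjoint_left.2 ?_
  rintro _ ⟨n, rfl⟩ ⟨n', hn'⟩
  have hcast := Int.toNat_of_nonneg (hf i n)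
  exact hij (congrArg Prod.fst
    ((h (f i n).toNat).unique (y₁ := (i, n)) (y₂ := (j, n')) hcast (hcast.trans hn'.symm)))

theorem stmt_5_general {ι : Type*} (hι : 3 ≤ ENat.card ι) {α : ι → ℝ} (hpos : ∀ i, 0 < α i)
    (hdisj : Pairwise (Disjoint on fun i => range (halfBeattySeq (α i)))) (hlt : ∃ i, α i < 2)
    (i : ι) : ∃ q : ℚ, α i = q := by
  by_contra! hi
  have hi_irr : Irrational (α i) := fun ⟨q, hq⟩ => hi q hq.symm
  have hirr (j : ι) : Irrational (α j) := by
    rcases eq_or_ne i j with rfl | hij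
    · exact hi_irr
    · exact irrational_of_disjoint_range_halfBeattySeq (hpos i) (hpos j) (hdisj hij) hi_irr
  obtain ⟨i₀, hi₀⟩ := hlt
  obtain ⟨j, hj, -⟩ := ENat.exists_ne_ne_of_three_le hι i₀ i₀
  obtain ⟨k, hk, hkj⟩ := ENat.exists_ne_ne_of_three_le hι i₀ j
  have hone : 1 < α i₀ := one_lt_of_notMem_range_halfBeattySeq (hpos i₀)
    (halfBeattySeq_nonneg (hpos j).le 0) (disjoint_right.1 (hdisj hj.symm) (mem_range_self 0))
  have hodd (j : ι) (hj : j ≠ i₀) : ∃ l : ℕ, α j = (2 * l + 1) * (α i₀).conjExponent :=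
    exists_eq_odd_mul_of_disjoint_range_halfBeattySeq (.conjExponent hone) hi₀ (hpos j) (hirr j)
      (hdisj hj.symm)
  obtain ⟨l, hl⟩ := hodd j hj
  obtain ⟨l', hl'⟩ := hodd k hk
  refine disjoint_left.1 (hdisj hkj) (mem_range_self l) ⟨l', ?_⟩
  rw [hl, hl', halfBeattySeq_odd_mul_comm]

/-- Graham's result in our special case: if the Beatty sequences `⌊α i * n + α i / 2⌋`
(with `0 < α 0 < ⋯ < α (k-1)`, `k ≥ 3`) partition ℕ, then every `α i` is rational. -/
theorem stmt_5 (k : ℕ) (hk : 3 ≤ k) (α : Fin k → ℝ) (hpos : ∀ i, 0 < α i)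
    (hmono : StrictMono α)
    (hpart : ∀ m : ℕ, ∃! p : Fin k × ℕ, (m : ℤ) = ⌊α p.1 * p.2 + α p.1 / 2⌋) :
    ∀ i : Fin k, ∃ q : ℚ, α i = (q : ℝ) := by
  obtain ⟨p, hp, -⟩ := hpart 0
  exact stmt_5_general (by simpa using mod_cast hk) hpos
    (pairwise_disjoint_range_of_forall_existsUnique
      (fun i => halfBeattySeq_nonneg (hpos i).le) hpart)
    ⟨p.1, lt_two_of_halfBeattySeq_eq_zero (hpos p.1).le hp.symm⟩
end

section
/- If (d_1, …, d_k) with d_1 ≥ … ≥ d_k > 0 and ∑ d_i = 1 is a Ramsey k-tuple (k ≥ 3), then d_i = 2^{k−i}/(2^k − 1) for every i. -/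
/-!
Colour the circle by the half-circles `fract (n * x) < 1 / 2`. Along a monochromatic copy of `d` the
fractional parts of `n * p` change by less than `1 / 2` from one point `p` to the next, so each
`n * d i` differs by less than `1 / 2` from a jump of `⌊n * p⌋`, and these jumps add up to `n`
around the circle: for every `n` the roundings of the `n * d i` add up to `n`.

Take `d` decreasing. The roundings of `n * d 0` and `n * (1 - d 0)` add up to `n`, so whenever the
rounding of `n * d 1` jumps, so does that of `n * (1 - d 0)`; comparing the gaps between jumps of
the two gives `d 0 = 2 * d 1`. Deleting `d 0` and rescaling by `1 / (1 - d 0)` preserves the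
property of the roundings, which reduces everything to `k = 3`. There `d 1 = x` has no multiple
whose distance to the integers lies in `[1 / 6, 1 / 4]`, and this forces `x = 2 / 7`.
-/

/-- `f n` is the integer nearest to `n * x`, and this is never a tie. -/
def IsRounding (f : ℕ → ℤ) (x : ℝ) : Prop := ∀ n, |n * x - f n| < 1 / 2

/-- The last `n` with `n * x ≤ m + 1 / 2`: a rounding of the multiples of `x ∈ (0, 1)` steps from
`m` to `m + 1` between this `n` and `n + 1`. -/
noncomputable def jumpTime (x : ℝ) (m : ℕ) : ℕ := ⌊(m + 1 / 2) / x⌋₊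

section JumpTime

variable {x : ℝ}

theorem jumpTime_mul_le (hx : 0 < x) (m : ℕ) : jumpTime x m * x ≤ m + 1 / 2 :=
  (le_div_iff₀ hx).mp (Nat.floor_le (by positivity))

theorem lt_jumpTime_add_one_mul (hx : 0 < x) (m : ℕ) : m + 1 / 2 < (jumpTime x m + 1) * x :=
  (div_lt_iff₀ hx).mp (Nat.lt_floor_add_one _)

theorem le_jumpTime (hx : 0 < x) (hx1 : x ≤ 1) (m : ℕ) : m ≤ jumpTime x m :=
  Nat.le_floor <| (le_div_iff₀ hx).mpr <| by nlinarith [m.cast_nonneg (α := ℝ)]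

theorem jumpTime_succ_le (hx : 0 < x) {q : ℕ} (hq : 1 ≤ q * x) (m : ℕ) :
    jumpTime x (m + 1) ≤ jumpTime x m + q := by
  rw [jumpTime, jumpTime, ← Nat.floor_add_natCast (by positivity)]
  refine Nat.floor_le_floor ?_
  rw [div_add' _ _ _ hx.ne']
  push_cast
  exact (div_le_div_iff_of_pos_right hx).mpr (by linarith)

theorem jumpTime_add_le (hx : 0 < x) {q : ℕ} (hq : q * x ≤ 1) (m : ℕ) :
    jumpTime x m + q ≤ jumpTime x (m + 1) := by
  rw [jumpTime, jumpTime, ← Nat.floor_add_natCast (by positivity)]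
  refine Nat.floor_le_floor ?_
  rw [div_add' _ _ _ hx.ne']
  push_cast
  exact (div_le_div_iff_of_pos_right hx).mpr (by linarith)

end JumpTime

namespace IsRounding

variable {f g : ℕ → ℤ} {x y : ℝ}

theorem eq_of_abs_lt (hf : IsRounding f x) {n : ℕ} {z : ℤ} (hz : |n * x - z| < 1 / 2) :
    f n = z := by
  have hfn := abs_lt.mp (hf n)
  rw [abs_lt] at hz
  have hlt : (f n : ℝ) < z + 1 := by linarith
  have hgt : (z : ℝ) < f n + 1 := by linarith
  norm_cast at hlt hgt
  omega

theorem apply_add_le (hf : IsRounding f x) {q : ℕ} {k : ℤ} (hq : q * x ≤ k) (n : ℕ) :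
    f (n + q) ≤ f n + k := by
  have hn := abs_lt.mp (hf n)
  have hnq := abs_lt.mp (hf (n + q))
  push_cast at hnq
  have hlt : (f (n + q) : ℝ) < f n + k + 1 := by linarith
  exact Int.lt_add_one_iff.mp (by exact_mod_cast hlt)

theorem add_le_apply_add (hf : IsRounding f x) {q : ℕ} {k : ℤ} (hq : k ≤ q * x) (n : ℕ) :
    f n + k ≤ f (n + q) := by
  have hn := abs_lt.mp (hf n)
  have hnq := abs_lt.mp (hf (n + q))
  push_cast at hnq
  have hlt : (f n + k : ℝ) < f (n + q) + 1 := by linarith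
  exact Int.lt_add_one_iff.mp (by exact_mod_cast hlt)

theorem monotone (hf : IsRounding f x) (hx : 0 ≤ x) : Monotone f :=
  monotone_nat_of_le_succ fun n ↦ by
    simpa using hf.add_le_apply_add (q := 1) (k := 0) (by simpa using hx) n

theorem one_sub (hf : IsRounding f x) : IsRounding (fun n ↦ n - f n) (1 - x) := fun n ↦ by
  rw [← abs_neg]
  convert hf n using 2
  push_cast
  ring

theorem apply_jumpTime_and_succ (hf : IsRounding f x) (hx : 0 < x) (hx1 : x ≤ 1) (m : ℕ) :
    f (jumpTime x m) = m ∧ f (jumpTime x m + 1) = m + 1 := by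
  set n := jumpTime x m
  have hle : n * x ≤ m + 1 / 2 := jumpTime_mul_le hx m
  have hlt : m + 1 / 2 < (n + 1) * x := lt_jumpTime_add_one_mul hx m
  have hfn := abs_lt.mp (hf n)
  have hfn' := abs_lt.mp (hf (n + 1))
  push_cast at hfn'
  have hbefore : (f n : ℝ) < m + 1 := by linarith
  have hafter : (m : ℝ) < f (n + 1) := by linarith
  have hstep := hf.apply_add_le (q := 1) (k := 1) (by simpa using hx1) n
  norm_cast at hbefore hafter
  omega

theorem eq_mul_of_forall_exists_apply_eq (hf : IsRounding f x) (hg : IsRounding g y) {r C : ℤ}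
    (h : ∀ m : ℕ, ∃ n ≥ m, f n = r * g n + C) : x = r * y := by
  by_contra hne
  have hpos : 0 < |x - r * y| := abs_pos.mpr (sub_ne_zero.mpr hne)
  obtain ⟨m, hm⟩ := exists_nat_gt ((1 / 2 + |(r : ℝ)| * (1 / 2) + |(C : ℝ)|) / |x - r * y|)
  obtain ⟨n, hmn, hn⟩ := h m
  have hn' : (f n : ℝ) = r * g n + C := by exact_mod_cast hn
  have hbound : n * |x - r * y| ≤ 1 / 2 + |(r : ℝ)| * (1 / 2) + |(C : ℝ)| :=
    calc n * |x - r * y| = |(n * x - f n) - r * (n * y - g n) + C| := by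
          rw [← Nat.abs_cast n, ← abs_mul, Nat.abs_cast, hn']
          ring_nf
      _ ≤ |n * x - f n| + |(r : ℝ)| * |n * y - g n| + |(C : ℝ)| := by
          rw [← abs_mul]
          exact (abs_add_le _ _).trans (add_le_add_left (abs_sub _ _) _)
      _ ≤ 1 / 2 + |(r : ℝ)| * (1 / 2) + |(C : ℝ)| := by
          gcongr
          exacts [(hf n).le, (hg n).le]
  have : (m : ℝ) * |x - r * y| ≤ n * |x - r * y| := by gcongr
  linarith [(div_lt_iff₀ hpos).mp hm]

theorem eq_mul_of_forall_apply_jumpTime_succ (hf : IsRounding f x) (hg : IsRounding g y)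
    (hy : 0 < y) (hy1 : y ≤ 1) {r : ℤ}
    (h : ∀ m, f (jumpTime y (m + 1)) = f (jumpTime y m) + r) : x = r * y := by
  refine hf.eq_mul_of_forall_exists_apply_eq hg (C := f (jumpTime y 0)) fun m ↦
    ⟨jumpTime y m, le_jumpTime hy hy1 m, ?_⟩
  rw [(hg.apply_jumpTime_and_succ hy hy1 m).1]
  induction m with
  | zero => simp
  | succ m ih =>
    rw [h, ih]
    push_cast
    ring

theorem apply_jumpTime_add_one (hg : IsRounding g y)
    (hjump : ∀ n, g (n + 1) = g n + 1 → f (n + 1) = f n + 1) (hy : 0 < y) (hy1 : y ≤ 1) (m : ℕ) :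
    f (jumpTime y m + 1) = f (jumpTime y m) + 1 := by
  obtain ⟨hbefore, hafter⟩ := hg.apply_jumpTime_and_succ hy hy1 m
  exact hjump _ (by rw [hbefore, hafter])

/- If `(q + 1) * x ≤ 2`, then `f` jumps at most twice, hence only at the two ends, between
consecutive jumps of `g`, which are at most `q` apart. -/
theorem two_lt_mul_of_jump (hf : IsRounding f x) (hg : IsRounding g y)
    (hjump : ∀ n, g (n + 1) = g n + 1 → f (n + 1) = f n + 1) (hy : 0 < y) (hy1 : y ≤ 1)
    (hx : 0 ≤ x) (hne : x ≠ y) {q : ℕ} (hq : 1 ≤ q * y) : 2 < (q + 1) * x := by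
  by_contra! hle
  refine hne ((hf.eq_mul_of_forall_apply_jumpTime_succ hg hy hy1 (r := 1) fun m ↦ ?_).trans
    (by simp))
  have hfirst := hg.apply_jumpTime_add_one hjump hy hy1 m
  have hsecond := hg.apply_jumpTime_add_one hjump hy hy1 (m + 1)
  have hfar := jumpTime_succ_le hy hq m
  have hnear := jumpTime_add_le hy (q := 1) (by simpa using hy1) m
  have htwo := hf.apply_add_le (q := q + 1) (k := 2) (by push_cast; exact hle) (jumpTime y m)
  have hlow := hf.monotone hx hnear
  have hupp := hf.monotone hx (Nat.add_le_add_right hfar 1)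
  rw [add_assoc] at hupp
  omega

/- The jumps of `g` are `3` or `4` apart and those of `f` are `2` or `3` apart, so between
consecutive jumps of `g` there are exactly two steps at which `f` does not jump. -/
theorem one_sub_eq_two_mul_of_jump (hf : IsRounding f x) (hg : IsRounding g y)
    (hjump : ∀ n, g (n + 1) = g n + 1 → f (n + 1) = f n + 1) (hy : 1 / 4 ≤ y) (hy' : y ≤ 1 / 3)
    (hx : 1 / 3 ≤ x) (hx' : x ≤ 1 / 2) : 1 - x = 2 * y := by
  have hy0 : 0 < y := by linarith
  have hy1 : y ≤ 1 := by linarith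
  refine (hf.one_sub.eq_mul_of_forall_apply_jumpTime_succ hg hy0 hy1 (r := 2) fun m ↦ ?_).trans
    (by simp)
  have hfirst := hg.apply_jumpTime_add_one hjump hy0 hy1 m
  have hsecond := hg.apply_jumpTime_add_one hjump hy0 hy1 (m + 1)
  have hfar := jumpTime_succ_le hy0 (q := 4) (by norm_num; linarith) m
  have hnear := jumpTime_add_le hy0 (q := 3) (by norm_num; linarith) m
  set n := jumpTime y m
  have hmono := hf.monotone (by linarith)
  have h12 := hmono (show n + 1 ≤ n + 2 by omega)
  have h02 := hf.apply_add_le (q := 2) (k := 1) (by norm_num; linarith) n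
  have h14 := hf.add_le_apply_add (q := 3) (k := 1) (by norm_num; linarith) (n + 1)
  have h04 := hf.apply_add_le (q := 4) (k := 2) (by norm_num; linarith) n
  obtain hgap | hgap : jumpTime y (m + 1) = n + 3 ∨ jumpTime y (m + 1) = n + 4 := by omega
  all_goals
    rw [hgap] at hsecond ⊢
    push_cast
    simp only [add_assoc, Nat.reduceAdd] at *
    omega

end IsRounding

/-- The sequences `c i` round the multiples of the `d i` so that the errors cancel. -/
structure IsBalancedRounding {ι : Type*} [Fintype ι] (c : ι → ℕ → ℤ) (d : ι → ℝ) : Prop where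
  isRounding : ∀ i, IsRounding (c i) (d i)
  sum_eq : ∀ n, ∑ i, c i n = n

theorem apply_one_lt_one_sub_apply_zero {k : ℕ} {d : Fin (k + 3) → ℝ} (hpos : ∀ i, 0 < d i)
    (hsum : ∑ i, d i = 1) : d 1 < 1 - d 0 := by
  rw [Fin.sum_univ_succ, Fin.sum_univ_succ, Fin.succ_zero_eq_one] at hsum
  have : 0 < ∑ i : Fin (k + 1), d i.succ.succ :=
    Finset.sum_pos (fun i _ ↦ hpos i.succ.succ) Finset.univ_nonempty
  linarith

namespace IsBalancedRounding

section Fintype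

variable {ι : Type*} [Fintype ι] {c : ι → ℕ → ℤ} {d : ι → ℝ}

theorem jump_one_sub_of_ne (hc : IsBalancedRounding c d) (hd : ∀ i, 0 ≤ d i) {i j : ι}
    (hij : i ≠ j) (n : ℕ) (hj : c j (n + 1) = c j n + 1) :
    ((n + 1 : ℕ) : ℤ) - c i (n + 1) = n - c i n + 1 := by
  have hmono (l : ι) : c l n ≤ c l (n + 1) := (hc.isRounding l).monotone (hd l) n.le_succ
  have hpair := Finset.add_le_sum (f := fun l ↦ c l (n + 1) - c l n)
    (fun l _ ↦ sub_nonneg.mpr (hmono l)) (Finset.mem_univ i) (Finset.mem_univ j) hij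
  rw [Finset.sum_sub_distrib, hc.sum_eq, hc.sum_eq] at hpair
  have := hmono i
  push_cast at hpair ⊢
  omega

theorem exists_one_half_lt (hc : IsBalancedRounding c d) : ∃ i, 1 / 2 < d i := by
  obtain ⟨i, -, hi⟩ := Finset.exists_lt_of_sum_lt (s := Finset.univ) (f := fun _ : ι ↦ (0 : ℤ))
    (g := fun i ↦ c i 1) (by simp [hc.sum_eq])
  have hone : (1 : ℝ) ≤ c i 1 := by exact_mod_cast hi
  have := (abs_lt.mp (hc.isRounding i 1)).1
  push_cast at this
  exact ⟨i, by linarith⟩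

end Fintype

section Fin

variable {k : ℕ}

theorem one_half_lt_apply_zero {c : Fin (k + 1) → ℕ → ℤ} {d : Fin (k + 1) → ℝ}
    (hc : IsBalancedRounding c d) (hd : Antitone d) : 1 / 2 < d 0 :=
  hc.exists_one_half_lt.elim fun i hi ↦ hi.trans_le (hd (Fin.zero_le i))

theorem sum_succ_eq {c : Fin (k + 1) → ℕ → ℤ} {d : Fin (k + 1) → ℝ}
    (hc : IsBalancedRounding c d) (n : ℕ) : ∑ i : Fin k, c i.succ n = n - c 0 n := by
  rw [← hc.sum_eq n, Fin.sum_univ_succ, add_sub_cancel_left]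

/- At `n = ⌊m / (1 - d 0)⌋` and at `n + 1` the roundings other than that of `d 0` add up to the same
`m`, so each of them is constant from `n` to `n + 1`. -/
theorem tail {c : Fin (k + 1) → ℕ → ℤ} {d : Fin (k + 1) → ℝ} (hc : IsBalancedRounding c d)
    (hd : ∀ i, 0 ≤ d i) (hd0 : 1 / 2 < d 0) (hd1 : d 0 < 1) :
    IsBalancedRounding (fun (i : Fin k) m ↦ c i.succ ⌊m / (1 - d 0)⌋₊)
      (fun i ↦ d i.succ / (1 - d 0)) := by
  set ε := 1 - d 0
  have hε0 : 0 < ε := by linarith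
  have hround : IsRounding (fun n ↦ n - c 0 n) ε := (hc.isRounding 0).one_sub
  have hfloor (m : ℕ) : ⌊m / ε⌋₊ * ε ≤ m :=
    (le_div_iff₀ hε0).mp (Nat.floor_le (by positivity))
  have hfloor' (m : ℕ) : m < (⌊m / ε⌋₊ + 1) * ε := (div_lt_iff₀ hε0).mp (Nat.lt_floor_add_one _)
  have hsum (m : ℕ) : ∑ i : Fin k, c i.succ ⌊m / ε⌋₊ = m := by
    rw [hc.sum_succ_eq]
    exact hround.eq_of_abs_lt (by
      rw [abs_lt, Int.cast_natCast]; constructor <;> linarith [hfloor m, hfloor' m])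
  have hsum' (m : ℕ) : ∑ i : Fin k, c i.succ (⌊m / ε⌋₊ + 1) = m := by
    rw [hc.sum_succ_eq]
    exact hround.eq_of_abs_lt (by
      rw [abs_lt, Int.cast_natCast]
      push_cast
      constructor <;> linarith [hfloor m, hfloor' m])
  refine ⟨fun i m ↦ ?_, hsum⟩
  set n := ⌊m / ε⌋₊
  have hconst : c i.succ n = c i.succ (n + 1) :=
    (Finset.sum_eq_sum_iff_of_le fun j _ ↦ (hc.isRounding j.succ).monotone (hd j.succ)
      n.le_succ).mp ((hsum m).trans (hsum' m).symm) i (Finset.mem_univ i)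
  have hlow : n * d i.succ ≤ m * (d i.succ / ε) := by
    rw [← mul_div_assoc, le_div_iff₀ hε0]
    nlinarith [mul_le_mul_of_nonneg_right (hfloor m) (hd i.succ)]
  have hupp : m * (d i.succ / ε) ≤ (n + 1) * d i.succ := by
    rw [← mul_div_assoc, div_le_iff₀ hε0]
    nlinarith [mul_le_mul_of_nonneg_right (hfloor' m).le (hd i.succ)]
  have hn := abs_lt.mp (hc.isRounding i.succ n)
  have hn' := abs_lt.mp (hc.isRounding i.succ (n + 1))
  rw [← hconst] at hn'
  push_cast at hn'
  rw [abs_lt]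
  constructor <;> linarith

theorem one_half_lt_mul_apply_one {c : Fin (k + 2) → ℕ → ℤ} {d : Fin (k + 2) → ℝ}
    (hc : IsBalancedRounding c d) (hd : Antitone d) {n : ℕ} (hn : 1 / 2 < n * (1 - d 0)) :
    1 / 2 < n * d 1 := by
  have hpos : 0 < n - c 0 n := by
    have := (abs_lt.mp ((hc.isRounding 0).one_sub n)).2
    have : (0 : ℝ) < (n - c 0 n : ℤ) := by linarith
    exact_mod_cast this
  obtain ⟨i, -, hi⟩ := Finset.exists_lt_of_sum_lt (s := Finset.univ)
    (f := fun _ : Fin (k + 1) ↦ (0 : ℤ)) (g := fun i ↦ c i.succ n)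
    (by rwa [Finset.sum_const_zero, hc.sum_succ_eq])
  have hone : (1 : ℝ) ≤ c i.succ n := by exact_mod_cast hi
  have hlt : 1 / 2 < n * d i.succ := by linarith [(abs_lt.mp (hc.isRounding i.succ n)).1]
  exact hlt.trans_le (mul_le_mul_of_nonneg_left (hd (Fin.succ_le_succ_iff.mpr (Fin.zero_le i)))
    n.cast_nonneg)

section LargestPart

variable {c : Fin (k + 3) → ℕ → ℤ} {d : Fin (k + 3) → ℝ}

theorem two_lt_mul_one_sub (hc : IsBalancedRounding c d) (hpos : ∀ i, 0 < d i)
    (hsum : ∑ i, d i = 1) {q : ℕ} (hq : 1 ≤ q * d 1) : 2 < (q + 1) * (1 - d 0) := by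
  have hlt : d 1 < 1 - d 0 := apply_one_lt_one_sub_apply_zero hpos hsum
  exact (hc.isRounding 0).one_sub.two_lt_mul_of_jump (hc.isRounding 1)
    (hc.jump_one_sub_of_ne (fun i ↦ (hpos i).le) zero_ne_one) (hpos 1)
    (by linarith [hpos 0]) (by linarith [hpos 1]) hlt.ne' hq

theorem one_third_lt_one_sub (hc : IsBalancedRounding c d) (hpos : ∀ i, 0 < d i) (hd : Antitone d)
    (hsum : ∑ i, d i = 1) : 1 / 3 < 1 - d 0 := by
  have hε : 0 < 1 - d 0 := (hpos 1).trans (apply_one_lt_one_sub_apply_zero hpos hsum)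
  set p := jumpTime (1 - d 0) 0
  have hle : p * (1 - d 0) ≤ 1 / 2 := by simpa using jumpTime_mul_le hε 0
  have hlt : 1 / 2 < (p + 1) * (1 - d 0) := by simpa using lt_jumpTime_add_one_mul hε 0
  have hfirst := hc.one_half_lt_mul_apply_one hd (n := p + 1) (by exact_mod_cast hlt)
  have hsecond := hc.two_lt_mul_one_sub hpos hsum (q := 2 * (p + 1))
    (by push_cast at hfirst ⊢; linarith)
  push_cast at hsecond
  linarith

theorem apply_one_lt_one_third (hc : IsBalancedRounding c d) (hpos : ∀ i, 0 < d i)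
    (hd : Antitone d) (hsum : ∑ i, d i = 1) : d 1 < 1 / 3 := by
  by_contra! hthree
  have := hc.two_lt_mul_one_sub hpos hsum (q := 3) (by push_cast; linarith)
  push_cast at this
  linarith [hc.one_half_lt_apply_zero hd]

theorem apply_zero_eq_two_mul_apply_one (hc : IsBalancedRounding c d) (hpos : ∀ i, 0 < d i)
    (hd : Antitone d) (hsum : ∑ i, d i = 1) : d 0 = 2 * d 1 := by
  have hhalf := hc.one_half_lt_apply_zero hd
  have hthird := hc.one_third_lt_one_sub hpos hd hsum
  have hlow : 1 / 4 < d 1 := by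
    have := hc.one_half_lt_mul_apply_one hd (n := 2) (by push_cast; linarith)
    push_cast at this
    linarith
  simpa only [sub_sub_cancel] using (hc.isRounding 0).one_sub.one_sub_eq_two_mul_of_jump
    (hc.isRounding 1) (hc.jump_one_sub_of_ne (fun i ↦ (hpos i).le) zero_ne_one) hlow.le
    (hc.apply_one_lt_one_third hpos hd hsum).le hthird.le (by linarith)

end LargestPart

end Fin

section Three

variable {c : Fin 3 → ℕ → ℤ} {d : Fin 3 → ℝ}

/- Otherwise `z`, `2 * z` and `n - 3 * z` would be the three roundings at `n`, and the last is off
by at least `1 / 2`. -/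
theorem abs_mul_sub_lt_or_lt (hc : IsBalancedRounding c d) (h0 : d 0 = 2 * d 1)
    (h2 : d 2 = 1 - 3 * d 1) (n : ℕ) (z : ℤ) :
    |n * d 1 - z| < 1 / 6 ∨ 1 / 4 < |n * d 1 - z| := by
  by_contra! hv
  obtain ⟨hlow, hupp⟩ := hv
  have hc1 : c 1 n = z := (hc.isRounding 1).eq_of_abs_lt (by linarith)
  have hc0 : c 0 n = 2 * z := by
    have hr := abs_lt.mp (hc.isRounding 0 n)
    rw [h0] at hr
    have hle := abs_le.mp hupp
    have hlt : (c 0 n : ℝ) < 2 * z + 1 := by linarith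
    have hgt : (2 * z : ℝ) < c 0 n + 1 := by linarith
    norm_cast at hlt hgt
    omega
  have hc2 : c 2 n = n - 3 * z := by
    have := hc.sum_eq n
    rw [Fin.sum_univ_three] at this
    omega
  have hr := hc.isRounding 2 n
  rw [h2, hc2] at hr
  push_cast at hr
  rw [show n * (1 - 3 * d 1) - (n - 3 * z) = -(3 * (n * d 1 - z)) by ring, abs_neg, abs_mul,
    abs_of_pos three_pos] at hr
  linarith

theorem mul_eq_of_abs_le (hc : IsBalancedRounding c d) (h0 : d 0 = 2 * d 1)
    (h2 : d 2 = 1 - 3 * d 1) {n : ℕ} {z : ℤ} (hz : |n * d 1 - z| ≤ 1 / 12) : n * d 1 = z := by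
  by_contra hne
  have hpos : 0 < |n * d 1 - z| := abs_pos.mpr (sub_ne_zero.mpr hne)
  set q := ⌊1 / 4 / |n * d 1 - z|⌋₊
  have hle : q * |n * d 1 - z| ≤ 1 / 4 := (le_div_iff₀ hpos).mp (Nat.floor_le (by positivity))
  have hlt : 1 / 4 < (q + 1) * |n * d 1 - z| := (div_lt_iff₀ hpos).mp (Nat.lt_floor_add_one _)
  have havoid := hc.abs_mul_sub_lt_or_lt h0 h2 (q * n) (q * z)
  push_cast at havoid
  rw [mul_assoc, ← mul_sub, abs_mul, Nat.abs_cast] at havoid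
  rcases havoid with h | h <;> linarith

theorem apply_one_eq_two_mul_apply_two (hc : IsBalancedRounding c d) (hpos : ∀ i, 0 < d i)
    (hd : Antitone d) (hsum : ∑ i, d i = 1) : d 1 = 2 * d 2 := by
  have h0 : d 0 = 2 * d 1 := hc.apply_zero_eq_two_mul_apply_one hpos hd hsum
  have h2 : d 2 = 1 - 3 * d 1 := by
    rw [Fin.sum_univ_three] at hsum
    linarith
  have hle : d 2 ≤ d 1 := hd (by decide)
  have hsmall : d 2 < 1 / 6 := by
    have := hc.abs_mul_sub_lt_or_lt h0 h2 3 1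
    rw [abs_sub_comm, abs_of_pos (by push_cast; linarith [hpos 2])] at this
    rcases this with h | h <;> push_cast at h <;> linarith
  have hlarge : 1 / 12 < d 2 := by
    by_contra! h
    have := hc.mul_eq_of_abs_le h0 h2 (n := 3) (z := 1)
      (by rw [abs_sub_comm, abs_of_pos] <;> push_cast <;> linarith [hpos 2])
    push_cast at this
    linarith [hpos 2]
  have hlarger : 1 / 8 < d 2 := by
    have := hc.abs_mul_sub_lt_or_lt h0 h2 6 2
    rw [abs_sub_comm, abs_of_pos (by push_cast; linarith [hpos 2])] at this
    rcases this with h | h <;> push_cast at h <;> linarith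
  have hseven := hc.mul_eq_of_abs_le h0 h2 (n := 7) (z := 2)
    (by rw [abs_le]; push_cast; constructor <;> linarith)
  push_cast at hseven
  linarith

end Three

theorem apply_castSucc_eq_two_mul_apply_succ {k : ℕ} {c : Fin (k + 3) → ℕ → ℤ}
    {d : Fin (k + 3) → ℝ} (hc : IsBalancedRounding c d) (hpos : ∀ i, 0 < d i) (hd : Antitone d)
    (hsum : ∑ i, d i = 1) (i : Fin (k + 2)) : d i.castSucc = 2 * d i.succ := by
  induction k with
  | zero =>
    fin_cases i
    exacts [hc.apply_zero_eq_two_mul_apply_one hpos hd hsum,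
      hc.apply_one_eq_two_mul_apply_two hpos hd hsum]
  | succ k ih =>
    cases i using Fin.cases with
    | zero => exact hc.apply_zero_eq_two_mul_apply_one hpos hd hsum
    | succ i =>
      have htail : ∑ i : Fin (k + 3), d i.succ = 1 - d 0 := by
        rw [← hsum, Fin.sum_univ_succ d, add_sub_cancel_left]
      have hε : 0 < 1 - d 0 :=
        htail ▸ Finset.sum_pos (fun i _ ↦ hpos i.succ) Finset.univ_nonempty
      have := ih (hc.tail (fun i ↦ (hpos i).le) (hc.one_half_lt_apply_zero hd) (sub_pos.mp hε))
        (fun i ↦ div_pos (hpos i.succ) hε)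
        (fun i j hij ↦ div_le_div_of_nonneg_right (hd (Fin.succ_le_succ_iff.mpr hij)) hε.le)
        (by rw [← Finset.sum_div, htail, div_self hε.ne']) i
      rwa [← mul_div_assoc, div_left_inj' hε.ne'] at this

end IsBalancedRounding

/-- Every two-colouring of the circle `ℝ / ℤ`, encoded as a `1`-periodic function, has points of one
colour whose consecutive distances are a rearrangement of `d`. -/
def IsRamseyTuple {k : ℕ} (d : Fin k → ℝ) : Prop :=
  ∀ c : ℝ → Bool, (∀ x, c (x + 1) = c x) →
    ∃ (x : ℝ) (σ : Equiv.Perm (Fin k)) (b : Bool), ∀ j : Fin k,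
      c (x + ∑ i with i < j, d (σ i)) = b

theorem abs_fract_sub_fract_lt {x y : ℝ} (h : Int.fract x < 1 / 2 ↔ Int.fract y < 1 / 2) :
    |Int.fract x - Int.fract y| < 1 / 2 := by
  have := Int.fract_nonneg x
  have := Int.fract_nonneg y
  have := Int.fract_lt_one x
  have := Int.fract_lt_one y
  rw [abs_lt]
  by_cases hx : Int.fract x < 1 / 2
  · have := h.mp hx
    constructor <;> linarith
  · have := mt h.mpr hx
    constructor <;> linarith

namespace IsRamseyTuple

variable {k : ℕ} {d : Fin k → ℝ}

theorem exists_points (hd : IsRamseyTuple d) (hsum : ∑ i, d i = 1) {c : ℝ → Bool}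
    (hc : ∀ x, c (x + 1) = c x) :
    ∃ (p : ℕ → ℝ) (σ : Equiv.Perm (Fin k)), p k = p 0 + 1 ∧
      (∀ i : Fin k, p (i + 1) = p i + d (σ i)) ∧ ∀ i : Fin k, c (p (i + 1)) = c (p i) := by
  obtain ⟨x, σ, b, hb⟩ := hd c hc
  let p (j : ℕ) : ℝ := x + ∑ i ∈ {i : Fin k | i < j}, d (σ i)
  have hp (i : Fin k) : c (p i) = b := by simpa only [p, Fin.val_fin_lt] using hb i
  have hlast : p k = p 0 + 1 := by simp [p, Equiv.sum_comp σ d, hsum]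
  refine ⟨p, σ, hlast, fun i ↦ ?_, fun i ↦ ?_⟩
  · have hinsert : Finset.univ.filter (fun l : Fin k ↦ l.val < i + 1) =
        insert i (Finset.univ.filter fun l : Fin k ↦ l.val < i) := by
      ext l
      simp only [Finset.mem_filter_univ, Finset.mem_insert, Fin.ext_iff]
      omega
    simp only [p]
    rw [hinsert, Finset.sum_insert (by simp)]
    ring
  · rw [hp]
    obtain hlt | heq : (i : ℕ) + 1 < k ∨ (i : ℕ) + 1 = k := by omega
    · exact hp ⟨i + 1, hlt⟩
    · rw [heq, hlast, hc]
      exact hp ⟨0, i.pos⟩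

theorem exists_isBalancedRounding (hd : IsRamseyTuple d) (hsum : ∑ i, d i = 1) :
    ∃ c, IsBalancedRounding c d := by
  suffices h : ∀ n : ℕ, ∃ c : Fin k → ℤ, (∀ i, |n * d i - c i| < 1 / 2) ∧ ∑ i, c i = n by
    choose c hround hc using h
    exact ⟨fun i n ↦ c n i, fun i n ↦ hround n i, hc⟩
  intro n
  obtain ⟨p, σ, hlast, hstep, hcolour⟩ := hd.exists_points hsum
    (c := fun x ↦ decide (Int.fract (n * x) < 1 / 2))
    (fun x ↦ by rw [mul_add_one, Int.fract_add_natCast])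
  simp only [decide_eq_decide] at hcolour
  refine ⟨fun i ↦ ⌊n * p (σ.symm i + 1)⌋ - ⌊n * p (σ.symm i)⌋, fun i ↦ ?_, ?_⟩
  · convert abs_fract_sub_fract_lt (hcolour (σ.symm i)) using 2
    have hgap := hstep (σ.symm i)
    rw [Equiv.apply_symm_apply] at hgap
    rw [Int.fract, Int.fract, Int.cast_sub, eq_sub_of_add_eq' hgap.symm]
    ring
  · rw [Equiv.sum_comp σ.symm fun i : Fin k ↦ ⌊n * p (i + 1)⌋ - ⌊n * p i⌋,
      Fin.sum_univ_eq_sum_range fun i ↦ ⌊n * p (i + 1)⌋ - ⌊n * p i⌋,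
      Finset.sum_range_sub fun i ↦ ⌊n * p i⌋, hlast, mul_add_one, Int.floor_add_natCast]
    ring

end IsRamseyTuple

section Geometric

variable {R : Type*} [CommRing R] {m : ℕ} {d : Fin (m + 1) → R} {r : R}

theorem eq_pow_mul_last (h : ∀ i : Fin m, d i.castSucc = r * d i.succ) (i : Fin (m + 1)) :
    d i = r ^ (m - i) * d (Fin.last m) := by
  induction i using Fin.reverseInduction with
  | last => simp
  | cast i ih =>
    rw [h, ih, ← mul_assoc, ← pow_succ', Fin.val_succ, Fin.val_castSucc]
    congr 2
    omega

theorem last_mul_pow_sub_one (h : ∀ i : Fin m, d i.castSucc = r * d i.succ) :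
    d (Fin.last m) * (r ^ (m + 1) - 1) = (r - 1) * ∑ i, d i := by
  rw [Finset.sum_congr rfl fun i _ ↦ eq_pow_mul_last h i, ← Finset.sum_mul,
    Fin.sum_univ_eq_sum_range fun i ↦ r ^ (m - i)]
  have := Finset.sum_range_reflect (fun i ↦ r ^ i) (m + 1)
  simp only [Nat.add_sub_cancel] at this
  rw [this, ← mul_geom_sum]
  ring

end Geometric

/-- Main theorem: a Ramsey `k`-tuple must be the `(k,2)`-power. The circle of unit
perimeter is modelled by ℝ with 1-periodic colourings; a monochromatic copy of `d` is a
starting point `x` and a permutation `σ` such that all partial-sum points get the same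
colour. -/
theorem stmt_11 (k : ℕ) (hk : 3 ≤ k) (d : Fin k → ℝ) (hpos : ∀ i, 0 < d i)
    (hmono : ∀ i j : Fin k, i ≤ j → d j ≤ d i) (hsum : ∑ i, d i = 1)
    (hram : ∀ c : ℝ → Bool, (∀ x, c (x + 1) = c x) →
      ∃ (x : ℝ) (σ : Equiv.Perm (Fin k)) (b : Bool), ∀ j : Fin k,
        c (x + ∑ i ∈ Finset.univ.filter (fun i => i < j), d (σ i)) = b) :
    ∀ i : Fin k, d i = (2:ℝ)^(k-1-(i:ℕ)) / ((2:ℝ)^k - 1) := by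
  obtain ⟨k, rfl⟩ := Nat.exists_eq_add_of_le' hk
  obtain ⟨c, hc⟩ := IsRamseyTuple.exists_isBalancedRounding hram hsum
  have hhalf := hc.apply_castSucc_eq_two_mul_apply_succ hpos (fun i j ↦ hmono i j) hsum
  have hlast := last_mul_pow_sub_one hhalf
  rw [hsum] at hlast
  have hpow : (2 : ℝ) ^ (k + 3) - 1 ≠ 0 := (sub_pos.mpr (one_lt_pow₀ one_lt_two (by omega))).ne'
  intro i
  rw [eq_div_iff hpow, eq_pow_mul_last hhalf i, mul_assoc, hlast]
  norm_num
end

section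
/- For every k ≥ 3 and every two-colouring of the vertices of a regular (2^k − 1)-gon, the number of monochromatic permuted copies of any k-tuple (d_1,…,d_k) of positive integer arc-lengths summing to 2^k − 1 is even. -/
/-!
The arc `d 0` comes first in every copy, so a copy is a walk through the remaining `k - 1` arcs in
arbitrary order, and it suffices to count monochromatic walks modulo two. If `f` is the indicator of
one colour, this count is the sum over all walks of `∏ j, f (w j) + ∏ j, (1 + f (w j))`. In
characteristic two, expanding the second product leaves the monomials `∏ j ∈ S, f (w j)` for proper
sets `S` of vertices. If `S` omits an interior vertex, exchanging the two arcs at that vertex pairs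
off the walks with equal monomials. If `S` omits the first vertex, moving the first arc to the end
shifts `S` by one place: this moves the missing last vertex of the set of all interior vertices into
the interior, and it matches the set omitting only the first vertex with the set omitting only the
last.
-/

open Finset Equiv.Perm

section Walk

variable {G : Type*} [AddCommGroup G] {n : ℕ}

/-- The `j`-th vertex of the walk that starts at `x` and takes the steps `d` in the order `σ`.
A walk with `n` steps has `n + 1` vertices, and step `i` leads from vertex `i.castSucc` to
`i.succ`. -/
def walkVertex (d : Fin n → G) (x : G) (σ : Equiv.Perm (Fin n)) (j : Fin (n + 1)) : G :=
  x + ∑ i with i.castSucc < j, d (σ i)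

theorem walkVertex_mul_swap (d : Fin (n + 1) → G) (x : G) (σ : Equiv.Perm (Fin (n + 1)))
    {i : Fin n} {j : Fin (n + 2)} (hj : j ≠ i.succ.castSucc) :
    walkVertex d x (σ * Equiv.swap i.castSucc i.succ) j = walkVertex d x σ j := by
  have lt_iff (l : Fin (n + 1)) :
      l.castSucc < j ↔ (Equiv.swap i.castSucc i.succ l).castSucc < j := by
    simp only [Equiv.swap_apply_def, Fin.lt_def, ne_eq, Fin.ext_iff, Fin.val_castSucc,
      Fin.val_succ] at hj ⊢
    split_ifs <;> simp only [Fin.val_castSucc, Fin.val_succ] <;> omega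
  refine congrArg (x + ·) (sum_equiv (Equiv.swap i.castSucc i.succ) (fun l => ?_) fun l _ => rfl)
  simpa only [mem_filter_univ] using lt_iff l

theorem walkVertex_mul_finRotate (d : Fin (n + 1) → G) (x : G) (σ : Equiv.Perm (Fin (n + 1)))
    (j : Fin (n + 1)) :
    walkVertex d (x + d (σ 0)) (σ * finRotate (n + 1)) j.castSucc = walkVertex d x σ j.succ := by
  simp only [walkVertex, sum_filter]
  rw [Fin.sum_univ_castSucc, Fin.sum_univ_succ]
  simp [Fin.coeSucc_eq_succ, Fin.le_last, add_assoc]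

section Moment

variable [Fintype G] {R : Type*} [CommSemiring R]

/-- The sum, over all walks with steps `d` in any order, of the product of the values of `f` at the
vertices with index in `S`. -/
def walkMoment (d : Fin n → G) (f : G → R) (S : Finset (Fin (n + 1))) : R :=
  ∑ p : G × Equiv.Perm (Fin n), ∏ j ∈ S, f (walkVertex d p.1 p.2 j)

theorem walkMoment_image_succ (d : Fin (n + 1) → G) (f : G → R) (T : Finset (Fin (n + 1))) :
    walkMoment d f (T.image Fin.succ) = walkMoment d f (T.image Fin.castSucc) := by
  let rotate (p : G × Equiv.Perm (Fin (n + 1))) : G × Equiv.Perm (Fin (n + 1)) :=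
    (p.1 + d (p.2 0), p.2 * finRotate (n + 1))
  have rotate_injective : Function.Injective rotate := by
    rintro ⟨x, σ⟩ ⟨y, τ⟩ h
    obtain ⟨hx, hσ⟩ := Prod.mk.inj h
    obtain rfl := mul_right_cancel hσ
    exact Prod.ext (add_right_cancel hx) rfl
  simp only [walkMoment, prod_image (Fin.succ_injective _).injOn,
    prod_image (Fin.castSucc_injective _).injOn]
  rw [← (Finite.injective_iff_bijective.1 rotate_injective).sum_comp
    fun p => ∏ j ∈ T, f (walkVertex d p.1 p.2 j.castSucc)]
  simp only [rotate, walkVertex_mul_finRotate]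

variable [CharP R 2]

theorem walkMoment_eq_zero_of_interior_notMem (d : Fin (n + 1) → G) (f : G → R) {i : Fin n}
    {S : Finset (Fin (n + 2))} (hS : i.succ.castSucc ∉ S) : walkMoment d f S = 0 := by
  have swap_ne_one : Equiv.swap i.castSucc i.succ ≠ 1 :=
    fun h => i.castSucc_lt_succ.ne (Equiv.swap_eq_one_iff.1 h)
  refine sum_involution (fun p _ => (p.1, p.2 * Equiv.swap i.castSucc i.succ)) ?_ ?_ ?_ ?_
  · rintro ⟨x, σ⟩ -
    have prod_eq : ∏ j ∈ S, f (walkVertex d x (σ * Equiv.swap i.castSucc i.succ) j) =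
        ∏ j ∈ S, f (walkVertex d x σ j) :=
      prod_congr rfl fun j hj => by rw [walkVertex_mul_swap d x σ (ne_of_mem_of_not_mem hj hS)]
    rw [prod_eq, CharTwo.add_self_eq_zero]
  · exact fun p _ _ h => swap_ne_one (mul_eq_left.1 (congrArg Prod.snd h))
  · exact fun _ _ => mem_univ _
  · exact fun p _ => by simp only [mul_assoc, Equiv.swap_mul_self, mul_one]

theorem walkMoment_compl_zero_last_eq_zero (d : Fin (n + 2) → G) (f : G → R) :
    walkMoment d f {0, Fin.last (n + 2)}ᶜ = 0 := by
  have eq_image : ({0, Fin.last (n + 2)}ᶜ : Finset (Fin (n + 3))) =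
      image Fin.succ {Fin.last (n + 1)}ᶜ := by
    ext j
    cases j using Fin.cases <;> simp [← Fin.succ_last]
  rw [eq_image, walkMoment_image_succ]
  exact walkMoment_eq_zero_of_interior_notMem d f (i := Fin.last n) (by simp)

theorem walkMoment_eq_zero_of_ne (d : Fin (n + 2) → G) (f : G → R) {S : Finset (Fin (n + 3))}
    (huniv : S ≠ univ) (hzero : S ≠ {0}ᶜ) (hlast : S ≠ {Fin.last (n + 2)}ᶜ) :
    walkMoment d f S = 0 := by
  by_cases! h : ∃ i : Fin (n + 1), i.succ.castSucc ∉ S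
  · obtain ⟨i, hi⟩ := h
    exact walkMoment_eq_zero_of_interior_notMem d f hi
  have compl_subset : Sᶜ ⊆ {0, Fin.last (n + 2)} := by
    intro j hj
    rw [mem_insert, mem_singleton]
    by_contra! hends
    obtain ⟨l, rfl⟩ := Fin.exists_succ_eq.2 hends.1
    obtain ⟨i, rfl⟩ := Fin.eq_castSucc_of_ne_last (x := l) (by simpa using hends.2)
    exact mem_compl.1 hj (h i)
  rw [← coe_subset, coe_pair, Set.subset_pair_iff_eq] at compl_subset
  norm_cast at compl_subset
  rcases compl_subset with hS | hS | hS | hS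
  · exact absurd ((compl_eq_empty_iff S).1 hS) huniv
  · exact absurd (eq_compl_comm.1 hS.symm) hzero
  · exact absurd (eq_compl_comm.1 hS.symm) hlast
  · rw [eq_compl_comm.1 hS.symm, walkMoment_compl_zero_last_eq_zero]

theorem sum_ssubsets_walkMoment_eq_zero (d : Fin (n + 2) → G) (f : G → R) :
    ∑ S ∈ ssubsets univ, walkMoment d f S = 0 := by
  have zero_ne_last : ({0}ᶜ : Finset (Fin (n + 3))) ≠ {Fin.last (n + 2)}ᶜ := by
    simp [Fin.ext_iff]
  rw [← sum_subset (s₁ := {{0}ᶜ, {Fin.last (n + 2)}ᶜ}), sum_pair zero_ne_last,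
    ← Fin.image_succ_univ, ← Fin.image_castSucc, walkMoment_image_succ, CharTwo.add_self_eq_zero]
  · intro S
    simp only [mem_insert, mem_singleton, mem_ssubsets, ssubset_univ_iff]
    rintro (rfl | rfl) <;> simp
  · intro S hS hS'
    simp only [mem_insert, mem_singleton, not_or] at hS'
    exact walkMoment_eq_zero_of_ne d f (ssubset_univ_iff.1 (mem_ssubsets.1 hS)) hS'.1 hS'.2

theorem sum_prod_add_prod_one_add_walkVertex_eq_zero (d : Fin (n + 2) → G) (f : G → R) :
    ∑ p : G × Equiv.Perm (Fin (n + 2)),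
      (∏ j, f (walkVertex d p.1 p.2 j) + ∏ j, (1 + f (walkVertex d p.1 p.2 j))) = 0 := by
  have sum_prod_one_add : ∑ p : G × Equiv.Perm (Fin (n + 2)),
      ∏ j, (1 + f (walkVertex d p.1 p.2 j)) = ∑ S ∈ powerset univ, walkMoment d f S := by
    simp only [prod_one_add, walkMoment]
    exact sum_comm
  calc
    _ = walkMoment d f univ + ∑ S ∈ powerset univ, walkMoment d f S := by
      rw [sum_add_distrib, sum_prod_one_add, walkMoment]
    _ = walkMoment d f univ + (walkMoment d f univ + ∑ S ∈ ssubsets univ, walkMoment d f S) := by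
      rw [ssubsets, add_sum_erase _ _ (mem_powerset_self univ)]
    _ = 0 := by
      rw [← add_assoc, CharTwo.add_self_eq_zero, zero_add, sum_ssubsets_walkMoment_eq_zero]

end Moment

theorem ite_forall_eq_eq_prod_add_prod {ι : Type*} [Fintype ι] (b : ι → Bool) (i₀ : ι)
    [Decidable (∀ i, b i = b i₀)] :
    (if ∀ i, b i = b i₀ then 1 else 0 : ZMod 2) =
      ∏ i, (if b i then 1 else 0) + ∏ i, (1 + if b i then 1 else 0) := by
  have one_add_ite (a : Bool) : (1 + if a then 1 else 0 : ZMod 2) = if a = false then 1 else 0 := by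
    cases a <;> rfl
  simp only [one_add_ite, prod_ite_zero, prod_const_one, mem_univ, true_implies]
  rcases (b i₀).eq_false_or_eq_true with h | h <;> simp only [h]
  · have not_all_false : ¬ ∀ i, b i = false := fun hb => by simp [hb i₀] at h
    rw [if_neg not_all_false, add_zero]
  · have not_all_true : ¬ ∀ i, b i = true := fun hb => by simp [hb i₀] at h
    rw [if_neg not_all_true, zero_add]

theorem even_card_monochromatic_walk [Finite G] (d : Fin (n + 2) → G) (c : G → Bool) :
    Even (Nat.card {p : G × Equiv.Perm (Fin (n + 2)) //
      ∀ j, c (walkVertex d p.1 p.2 j) = c (walkVertex d p.1 p.2 (Fin.last _))}) := by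
  have := Fintype.ofFinite G
  rw [← ZMod.natCast_eq_zero_iff_even, Nat.card_eq_fintype_card, Fintype.card_subtype,
    natCast_card_filter]
  have indicator_eq (p : G × Equiv.Perm (Fin (n + 2))) :=
    ite_forall_eq_eq_prod_add_prod (fun j => c (walkVertex d p.1 p.2 j)) (Fin.last _)
  simp only [indicator_eq]
  exact sum_prod_add_prod_one_add_walkVertex_eq_zero d fun x => if c x then 1 else 0

end Walk

theorem card_apply_zero_eq_zero_and {α : Type*} {n : ℕ}
    (P : α × Equiv.Perm (Fin (n + 1)) → Prop) :
    Nat.card {p : α × Equiv.Perm (Fin (n + 1)) // p.2 0 = 0 ∧ P p} =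
      Nat.card {p : α × Equiv.Perm (Fin n) // P (p.1, decomposeFin.symm (0, p.2))} := by
  let extend (p : α × Equiv.Perm (Fin n)) : α × Equiv.Perm (Fin (n + 1)) :=
    (p.1, decomposeFin.symm (0, p.2))
  have extend_injective : Function.Injective extend := by
    rintro ⟨x, τ⟩ ⟨y, ρ⟩ h
    simpa [extend] using h
  have range_extend : Set.range extend = {p | p.2 0 = 0} := by
    ext ⟨x, σ⟩
    obtain ⟨⟨a, τ⟩, rfl⟩ := decomposeFin.symm.surjective σ
    simp [extend, eq_comm]
  have card_image := Nat.card_image_of_injective extend_injective (extend ⁻¹' {p | P p})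
  rwa [Set.image_preimage_eq_range_inter, range_extend] at card_image

section Polygon

variable {G : Type*} [AddCommGroup G] {n : ℕ}

theorem walkVertex_tail_last (d : Fin (n + 1) → G) (hd : ∑ i, d i = 0) (x : G)
    (τ : Equiv.Perm (Fin n)) :
    walkVertex (fun i => d i.succ) x τ (Fin.last n) + d 0 = x := by
  rw [Fin.sum_univ_succ, add_comm] at hd
  simp [walkVertex, Fin.castSucc_lt_last, Equiv.sum_comp τ fun i => d i.succ, add_assoc, hd]

theorem walkVertex_tail_castSucc (d : Fin (n + 1) → G) (x : G) (τ : Equiv.Perm (Fin n))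
    (j : Fin n) :
    walkVertex (fun i => d i.succ) x τ j.castSucc + d 0 =
      x + ∑ i with i < j.succ, d (decomposeFin.symm (0, τ) i) := by
  simp only [walkVertex, sum_filter]
  rw [Fin.sum_univ_succ]
  simp [add_assoc, add_comm (d 0)]

theorem monochromatic_tail_iff (d : Fin (n + 1) → G) (hd : ∑ i, d i = 0) (c : G → Bool) (x : G)
    (τ : Equiv.Perm (Fin n)) :
    (∀ j, c (walkVertex (fun i => d i.succ) x τ j + d 0) =
        c (walkVertex (fun i => d i.succ) x τ (Fin.last n) + d 0)) ↔
      ∀ j, c (x + ∑ i with i < j, d (decomposeFin.symm (0, τ) i)) = c x := by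
  rw [Fin.forall_fin_succ', Fin.forall_fin_succ]
  simp [walkVertex_tail_last d hd, walkVertex_tail_castSucc]

end Polygon

theorem stmt_18_general {G : Type*} [AddCommGroup G] [Finite G] {k : ℕ} (hk : 3 ≤ k)
    (d : Fin k → G) (hsum : ∑ i, d i = 0) (c : G → Bool) :
    Even (Nat.card {pr : G × Equiv.Perm (Fin k) //
      pr.2 ⟨0, by omega⟩ = ⟨0, by omega⟩ ∧ ∀ j : Fin k,
        c (pr.1 + ∑ i ∈ Finset.univ.filter (fun i => i < j), d (pr.2 i)) = c pr.1}) := by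
  obtain ⟨n, rfl⟩ := Nat.exists_eq_add_of_le' hk
  have even_walks := even_card_monochromatic_walk (fun i => d i.succ) fun y => c (y + d 0)
  simp only [monochromatic_tail_iff d hsum c] at even_walks
  rwa [← card_apply_zero_eq_zero_and fun p => ∀ j, c (p.1 + ∑ i with i < j, d (p.2 i)) = c p.1]
    at even_walks

/-- In any two-colouring of ℤ/(2^k-1)ℤ, the number of monochromatic permuted copies of a
`k`-tuple of positive integer arc-lengths summing to `2^k - 1` is even. Copies are counted
as pairs of a starting vertex and a cyclic ordering (a permutation fixing 0). -/
theorem stmt_18 (k : ℕ) (hk : 3 ≤ k) (d : Fin k → ℕ) (hd : ∀ i, 0 < d i)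
    (hsum : ∑ i, d i = 2^k - 1) (c : ZMod (2^k - 1) → Bool) :
    Even (Nat.card {pr : ZMod (2^k - 1) × Equiv.Perm (Fin k) //
      pr.2 ⟨0, by omega⟩ = ⟨0, by omega⟩ ∧ ∀ j : Fin k,
        c (pr.1 + ∑ i ∈ Finset.univ.filter (fun i => i < j),
          ((d (pr.2 i) : ℕ) : ZMod (2^k - 1))) = c pr.1}) := by
  have : NeZero (2 ^ k - 1) := ⟨(Nat.sub_pos_of_lt (Nat.one_lt_two_pow (by omega))).ne'⟩
  exact stmt_18_general hk (fun i => (d i : ZMod (2 ^ k - 1)))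
    (by rw [← Nat.cast_sum, hsum, ZMod.natCast_self]) c
end
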